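/- arXiv:1302.4106 — 2 statements merged into one kernel-verified Lean document; each statement's English description precedes it below -/
import Mathlib

section
/- Corollary 3.4: Let 𝕄 be an infinite subset of ℕ, let Ω ⊆ ℂⁿ be an open convex set, and let (N_j)_{j≥0} be any enumeration of ℕⁿ. Then there exists f ∈ A^∞(Ω) such that: for every compact convex set K ⊆ ℂⁿ disjoint from the closure of Ω and every holomorphic polynomial P on ℂⁿ, there exists a sequence (λ_N)_{N≥1} with λ_N ∈ 𝕄 such that for every compact set L contained in the closure of Ω, sup_{ζ ∈ L, z ∈ K} ‖S_{λ_N}(f,ζ)(z) − P(z)‖ → 0 as N → ∞, and for every multi-index ℓ ∈ ℕⁿ, sup_{ζ ∈ L, z ∈ L} ‖D^ℓ[S_{λ_N}(f,ζ)](z) − (D^ℓ f)(z)‖ → 0 as N → ∞. The set of all such f is a dense G_δ subset of A^∞(Ω). -/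
open Set Filter Topology

noncomputable section

/-- Evaluation of a multivariate polynomial as a function on `ℂⁿ = Fin n → ℂ`. -/
def mvEval {n : ℕ} (p : MvPolynomial (Fin n) ℂ) : (Fin n → ℂ) → ℂ :=
  fun z => MvPolynomial.eval z p

/-- The polynomially convex hull of a set in `ℂⁿ`. -/
def polyHull {n : ℕ} (K : Set (Fin n → ℂ)) : Set (Fin n → ℂ) :=
  {z | ∀ p : MvPolynomial (Fin n) ℂ, ‖mvEval p z‖ ≤ sSup ((fun w => ‖mvEval p w‖) '' K)}

/-- A set in `ℂⁿ` is polynomially convex if it equals its polynomially convex hull. -/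
def IsPolyConvex {n : ℕ} (K : Set (Fin n → ℂ)) : Prop := polyHull K = K

/-- The polynomially convex hull of a subset of `ℂ`. -/
def polyHull1 (F : Set ℂ) : Set ℂ :=
  {z | ∀ p : Polynomial ℂ, ‖p.eval z‖ ≤ sSup ((fun w => ‖p.eval w‖) '' F)}

/-- A subset of `ℂ` is polynomially convex if it equals its polynomially convex hull. -/
def IsPolyConvex1 (F : Set ℂ) : Prop := polyHull1 F = F

/-- Partial derivative in the `i`-th coordinate direction. -/
def pd {n : ℕ} (i : Fin n) (f : (Fin n → ℂ) → ℂ) : (Fin n → ℂ) → ℂ :=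
  fun z => fderiv ℂ f z (Pi.single i 1)

/-- Iterated partial derivative `D^ℓ = ∂^{ℓ₁+⋯+ℓₙ}/∂z₁^{ℓ₁}⋯∂zₙ^{ℓₙ}`. -/
def Dml {n : ℕ} (ℓ : Fin n → ℕ) (f : (Fin n → ℂ) → ℂ) : (Fin n → ℂ) → ℂ :=
  (List.finRange n).foldr (fun i g => (pd i)^[ℓ i] g) f

/-- Partial sums `S_λ` of a Taylor-type series around `ζ`, with coefficients computed from a
given family `g` of (extended) partial derivatives: the coefficient of the monomial
`(z-ζ)^{N_j}` is `g (N_j) ζ / (N_{j,1}! ⋯ N_{j,n}!)`. -/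
def pSumExt {n : ℕ} (Nj : ℕ → Fin n → ℕ) (g : (Fin n → ℕ) → (Fin n → ℂ) → ℂ)
    (ζ : Fin n → ℂ) (lam : ℕ) : (Fin n → ℂ) → ℂ :=
  fun z => ∑ j ∈ Finset.range (lam + 1),
    (((∏ i, Nat.factorial (Nj j i) : ℕ) : ℂ))⁻¹ * g (Nj j) ζ * ∏ i, (z i - ζ i) ^ (Nj j i)

/-- Partial sums `S_λ(f,ζ)` of the Taylor development of `f` around `ζ`. -/
def pSum {n : ℕ} (Nj : ℕ → Fin n → ℕ) (f : (Fin n → ℂ) → ℂ)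
    (ζ : Fin n → ℂ) (lam : ℕ) : (Fin n → ℂ) → ℂ :=
  pSumExt Nj (fun ℓ => Dml ℓ f) ζ lam

/-- The space `O(Ω)` of holomorphic functions on `Ω`. -/
def Ospace (n : ℕ) (Ω : Set (Fin n → ℂ)) : Type :=
  {f : (Fin n → ℂ) → ℂ // DifferentiableOn ℂ f Ω}

/-- Topology of uniform convergence on compact subsets of `Ω` on `O(Ω)` (the compact-open
topology induced via restriction to `Ω`). -/
instance (n : ℕ) (Ω : Set (Fin n → ℂ)) : TopologicalSpace (Ospace n Ω) :=
  TopologicalSpace.induced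
    (fun f : Ospace n Ω =>
      (⟨Ω.restrict f.1, continuousOn_iff_continuous_restrict.mp f.2.continuousOn⟩ : C(Ω, ℂ)))
    inferInstance

/-- Membership in `A^∞(Ω)`: `f` is holomorphic on `Ω` and each partial derivative `D^ℓ f`
extends continuously to the closure of `Ω`. -/
def AinfMem (n : ℕ) (Ω : Set (Fin n → ℂ)) (f : (Fin n → ℂ) → ℂ) : Prop :=
  DifferentiableOn ℂ f Ω ∧
    ∀ ℓ : Fin n → ℕ, ∃ g : (Fin n → ℂ) → ℂ,
      ContinuousOn g (closure Ω) ∧ Set.EqOn g (Dml ℓ f) Ω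

/-- The space `A^∞(Ω)`. -/
def AinfSpace (n : ℕ) (Ω : Set (Fin n → ℂ)) : Type :=
  {f : (Fin n → ℂ) → ℂ // AinfMem n Ω f}

/-- The chosen continuous extension of `D^ℓ f` to the closure of `Ω`, for `f ∈ A^∞(Ω)`.
(Its restriction to the closure of `Ω` is uniquely determined.) -/
def AinfExt {n : ℕ} {Ω : Set (Fin n → ℂ)} (f : AinfSpace n Ω) (ℓ : Fin n → ℕ) :
    (Fin n → ℂ) → ℂ :=
  Classical.choose (f.2.2 ℓ)

lemma AinfExt_continuousOn {n : ℕ} {Ω : Set (Fin n → ℂ)} (f : AinfSpace n Ω) (ℓ : Fin n → ℕ) :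
    ContinuousOn (AinfExt f ℓ) (closure Ω) :=
  (Classical.choose_spec (f.2.2 ℓ)).1

lemma AinfExt_eqOn {n : ℕ} {Ω : Set (Fin n → ℂ)} (f : AinfSpace n Ω) (ℓ : Fin n → ℕ) :
    Set.EqOn (AinfExt f ℓ) (Dml ℓ f.1) Ω :=
  (Classical.choose_spec (f.2.2 ℓ)).2

/-- Topology on `A^∞(Ω)`: uniform convergence of every partial derivative on every compact
subset of the closure of `Ω`. -/
instance (n : ℕ) (Ω : Set (Fin n → ℂ)) : TopologicalSpace (AinfSpace n Ω) :=
  TopologicalSpace.induced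
    (fun f : AinfSpace n Ω => fun ℓ : Fin n → ℕ =>
      (⟨(closure Ω).restrict (AinfExt f ℓ),
        continuousOn_iff_continuous_restrict.mp (AinfExt_continuousOn f ℓ)⟩ :
          C(closure Ω, ℂ)))
    inferInstance

/-- A smooth compact curve in `ℂⁿ`: the image of an injective `C^∞` map with
nowhere-vanishing derivative, defined on a compact interval (an arc) or on the
circle (a closed curve, modelled by a 1-periodic map). -/
def IsSmoothCompactCurve {n : ℕ} (K : Set (Fin n → ℂ)) : Prop :=
  ∃ γ : ℝ → (Fin n → ℂ), ContDiff ℝ (⊤ : ℕ∞) γ ∧ (∀ t, deriv γ t ≠ 0) ∧ K = γ '' Set.Icc 0 1 ∧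
    (Set.InjOn γ (Set.Icc 0 1) ∨ (Function.Periodic γ 1 ∧ Set.InjOn γ (Set.Ico 0 1)))

/-- A disjoint union of finitely many smooth compact curves. -/
def IsFiniteUnionOfSmoothCurves {n : ℕ} (K : Set (Fin n → ℂ)) : Prop :=
  ∃ (m : ℕ) (C : Fin m → Set (Fin n → ℂ)),
    (∀ i, IsSmoothCompactCurve (C i)) ∧ Pairwise (Function.onFun Disjoint C) ∧ K = ⋃ i, C i

/-!
The universal functions form a countable intersection of sets of functions whose Taylor sums come
within `ε` of one polynomial on one compact convex set, so by Baire's theorem only the density of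
each such set is at stake. Dilating about a point of `Ω` moves `closure Ω` into `Ω`, so it suffices
to approximate simultaneously a function holomorphic near the convex compact `L` and a polynomial on
the disjoint convex compact `K` by a single polynomial, whose Taylor sums are eventually itself.

A function holomorphic on a star-shaped neighbourhood of `L` is a limit of polynomials on `L`: its
dilates depend holomorphically on the dilation parameter, as elements of `C(L, ℂ)`, and their Taylor
coefficients at parameter `0` are polynomials, so by the identity theorem the curve of dilates stays
in the closure of the polynomials. To glue the approximations on `L` and `K`, take an affine form
`w` with negative real part on `L` and positive real part on `K`: then
`(w + 1) ^ N / ((w + 1) ^ N + (w - 1) ^ N)` tends uniformly to `0` on `L` and to `1` on `K`, and a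
spectral argument shows that it is itself a uniform limit of polynomials on `L ∪ K`.
-/

section NormedSpace

variable {E F ι : Type*} [NormedAddCommGroup E] [NormedSpace ℂ E]
  [NormedAddCommGroup F] [NormedSpace ℂ F] {φ : Filter ι}

lemma norm_fderiv_le_of_norm_le {f : E → F} {c : E} {R M : ℝ} (hR : 0 < R)
    (hd : DifferentiableOn ℂ f (Metric.ball c R)) (hM : ∀ z ∈ Metric.ball c R, ‖f z‖ ≤ M) :
    ‖fderiv ℂ f c‖ ≤ 2 * M / R := by
  refine Complex.norm_fderiv_le_div_of_mapsTo_ball hd (fun z hz => ?_) hR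
  rw [Metric.mem_closedBall, dist_eq_norm]
  linarith [norm_sub_le (f z) (f c), hM z hz, hM c (Metric.mem_ball_self hR)]

lemma norm_sub_sub_fderiv_le {f : E → F} {c h : E} {R M : ℝ} (hh : ‖h‖ < R)
    (hd : DifferentiableOn ℂ f (Metric.ball c R)) (hM : ∀ z ∈ Metric.ball c R, ‖f z‖ ≤ M) :
    ‖f (c + h) - f c - fderiv ℂ f c h‖ ≤ 4 * M * (‖h‖ / R) ^ 2 := by
  have hR : 0 < R := (norm_nonneg h).trans_lt hh
  have hc : c ∈ Metric.ball c R := Metric.mem_ball_self hR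
  have hM0 : 0 ≤ M := (norm_nonneg _).trans (hM c hc)
  let remainder : E → F := fun w => f w - f c - fderiv ℂ f c (w - c)
  have remainder_self : remainder c = 0 := by simp [remainder]
  have remainder_differentiable : DifferentiableOn ℂ remainder (Metric.ball c R) := by
    fun_prop
  have remainder_le : MapsTo remainder (Metric.ball c R)
      (Metric.closedBall (remainder c) (4 * M)) := fun w hw => by
    have hlin : ‖fderiv ℂ f c (w - c)‖ ≤ 2 * M := calc
      ‖fderiv ℂ f c (w - c)‖ ≤ ‖fderiv ℂ f c‖ * ‖w - c‖ := (fderiv ℂ f c).le_opNorm _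
      _ ≤ 2 * M / R * R := by
        gcongr
        · exact norm_fderiv_le_of_norm_le hR hd hM
        · exact (mem_ball_iff_norm.1 hw).le
      _ = 2 * M := by field_simp
    rw [remainder_self, mem_closedBall_zero_iff]
    linarith [norm_sub_le (f w - f c) (fderiv ℂ f c (w - c)), norm_sub_le (f w) (f c),
      hM w hw, hM c hc]
  have remainder_isLittleO : (remainder · - remainder c) =o[𝓝 c] (fun w => ‖w - c‖ ^ 1) := by
    simpa only [remainder_self, sub_zero, pow_one] using
      (hd.differentiableAt (Metric.ball_mem_nhds c hR)).hasFDerivAt.isLittleO.norm_right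
  have key := Complex.dist_le_mul_div_pow_of_mapsTo_ball_of_isLittleO remainder_differentiable
    remainder_le remainder_isLittleO (z := c + h) (by simpa using hh)
  simpa [remainder_self, remainder] using key

lemma uniformCauchySeqOn_fderiv {f : ι → E → F} {s V : Set E} {r : ℝ} (hr : 0 < r)
    (hball : ∀ z ∈ s, Metric.ball z r ⊆ V) (hf : UniformCauchySeqOn f φ V)
    (hd : ∀ᶠ k in φ, DifferentiableOn ℂ (f k) V) :
    UniformCauchySeqOn (fun k => fderiv ℂ (f k)) φ s := by
  intro u hu
  obtain ⟨ε, hε, hεu⟩ := Metric.mem_uniformity_dist.1 hu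
  have hsmall := hf _ (Metric.dist_mem_uniformity (show 0 < ε * r / 4 by positivity))
  filter_upwards [hsmall, hd.prod_mk hd] with k hk ⟨hd₁, hd₂⟩ z hz
  have hVz : V ∈ 𝓝 z := mem_of_superset (Metric.ball_mem_nhds z hr) (hball z hz)
  refine hεu ?_
  rw [dist_eq_norm, ← fderiv_sub (hd₁.differentiableAt hVz) (hd₂.differentiableAt hVz)]
  calc ‖fderiv ℂ (f k.1 - f k.2) z‖ ≤ 2 * (ε * r / 4) / r :=
        norm_fderiv_le_of_norm_le hr ((hd₁.sub hd₂).mono (hball z hz)) fun w hw => by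
          simpa only [dist_eq_norm, Pi.sub_apply] using (hk w (hball z hz hw)).le
    _ < ε := by field_simp; norm_num

lemma differentiableOn_of_tendstoUniformlyOn [CompleteSpace F] [NeBot φ] {f : ι → E → F}
    {g : E → F} {V : Set E} (hV : IsOpen V) (hf : TendstoUniformlyOn f g φ V)
    (hd : ∀ᶠ k in φ, DifferentiableOn ℂ (f k) V) : DifferentiableOn ℂ g V := by
  intro x hx
  obtain ⟨R, hR, hRV⟩ := Metric.isOpen_iff.1 hV x hx
  have hball : ∀ z ∈ Metric.ball x (R / 2), Metric.ball z (R / 2) ⊆ V := fun z hz =>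
    (Metric.ball_subset_ball' (by linarith [Metric.mem_ball.1 hz])).trans hRV
  have hcauchy := uniformCauchySeqOn_fderiv (half_pos hR) hball hf.uniformCauchySeqOn hd
  have hlim : ∀ z ∈ Metric.ball x (R / 2), ∃ L, Tendsto (fun k => fderiv ℂ (f k) z) φ (𝓝 L) :=
    fun z hz => CompleteSpace.complete (hcauchy.cauchy_map hz)
  choose! g' hg' using hlim
  have hunif := hcauchy.tendstoUniformlyOn_of_tendsto hg'
  have hnhds : Metric.ball x (R / 2) ∈ 𝓝 x := Metric.ball_mem_nhds x (half_pos hR)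
  have hasFDerivAt_eventually : ∀ᶠ p : ι × E in φ ×ˢ 𝓝 x,
      HasFDerivAt (f p.1) (fderiv ℂ (f p.1) p.2) p.2 := by
    filter_upwards [hd.prod_mk (hV.mem_nhds hx)] with p ⟨hp, hpV⟩
    exact (hp.differentiableAt (hV.mem_nhds hpV)).hasFDerivAt
  have hgx : HasFDerivAt g (g' x) x := hasFDerivAt_of_tendstoUniformlyOnFilter
    (hunif.tendstoUniformlyOnFilter.mono_right (le_principal_iff.2 hnhds))
    hasFDerivAt_eventually
    (eventually_of_mem (hV.mem_nhds hx) fun y hy => hf.tendsto_at hy)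
  exact hgx.differentiableAt.differentiableWithinAt

lemma differentiableOn_of_tendstoLocallyUniformlyOn [LocallyCompactSpace E] [CompleteSpace F]
    [NeBot φ] {f : ι → E → F} {g : E → F} {V : Set E} (hV : IsOpen V)
    (hf : TendstoLocallyUniformlyOn f g φ V) (hd : ∀ᶠ k in φ, DifferentiableOn ℂ (f k) V) :
    DifferentiableOn ℂ g V := by
  intro x hx
  obtain ⟨K, hK, hxK, hKV⟩ := exists_compact_subset hV hx
  have hunif := (tendstoLocallyUniformlyOn_iff_forall_isCompact hV).1 hf K hKV hK
  exact ((differentiableOn_of_tendstoUniformlyOn isOpen_interior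
    (hunif.mono interior_subset) (hd.mono fun k hk => hk.mono (interior_subset.trans hKV))
    ).differentiableAt (isOpen_interior.mem_nhds hxK)).differentiableWithinAt

lemma tendstoLocallyUniformlyOn_fderiv [ProperSpace E] {f : ι → E → F} {g : E → F} {V : Set E}
    (hV : IsOpen V) (hf : TendstoLocallyUniformlyOn f g φ V)
    (hd : ∀ᶠ k in φ, DifferentiableOn ℂ (f k) V) (hg : DifferentiableOn ℂ g V) :
    TendstoLocallyUniformlyOn (fun k => fderiv ℂ (f k)) (fderiv ℂ g) φ V := by
  rw [Metric.tendstoLocallyUniformlyOn_iff]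
  intro ε hε x hx
  obtain ⟨R, hR, hRV⟩ := Metric.nhds_basis_closedBall.mem_iff.1 (hV.mem_nhds hx)
  have hball : ∀ z ∈ Metric.ball x (R / 2), Metric.ball z (R / 2) ⊆ Metric.closedBall x R :=
    fun z hz => (Metric.ball_subset_ball' (by linarith [Metric.mem_ball.1 hz])).trans
      Metric.ball_subset_closedBall
  have hunif := (tendstoLocallyUniformlyOn_iff_forall_isCompact hV).1 hf _ hRV
    (isCompact_closedBall x R)
  refine ⟨Metric.ball x (R / 2),
    mem_nhdsWithin_of_mem_nhds (Metric.ball_mem_nhds x (half_pos hR)), ?_⟩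
  filter_upwards [hd, Metric.tendstoUniformlyOn_iff.1 hunif (ε * R / 8) (by positivity)]
    with k hdk hk z hz
  have hVz : V ∈ 𝓝 z :=
    mem_of_superset (Metric.ball_mem_nhds z (half_pos hR)) ((hball z hz).trans hRV)
  rw [dist_eq_norm, ← fderiv_sub (hg.differentiableAt hVz) (hdk.differentiableAt hVz)]
  calc ‖fderiv ℂ (g - f k) z‖ ≤ 2 * (ε * R / 8) / (R / 2) :=
        norm_fderiv_le_of_norm_le (half_pos hR)
          ((hg.sub hdk).mono ((hball z hz).trans hRV)) fun w hw => by
          simpa only [dist_eq_norm, Pi.sub_apply] using (hk w (hball z hz hw)).le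
    _ < ε := by field_simp; norm_num

lemma tendstoUniformlyOn_slope_fderiv {f : E → F} {s V : Set E} {r M : ℝ} (hr : 0 < r)
    (hball : ∀ z ∈ s, Metric.ball z r ⊆ V) (hd : DifferentiableOn ℂ f V)
    (hM : ∀ z ∈ V, ‖f z‖ ≤ M) (v : E) :
    TendstoUniformlyOn (fun (t : ℂ) z => t⁻¹ • (f (z + t • v) - f z)) (fun z => fderiv ℂ f z v)
      (𝓝[≠] 0) s := by
  rw [Metric.tendstoUniformlyOn_iff]
  intro ε hε
  have herror : Tendsto (fun t : ℂ => ‖t‖ * (4 * M * (‖v‖ / r) ^ 2)) (𝓝[≠] 0) (𝓝 0) :=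
    ((Continuous.tendsto' (by fun_prop) _ _ (by simp)).mono_left nhdsWithin_le_nhds)
  have hstep : Tendsto (fun t : ℂ => ‖t • v‖) (𝓝[≠] 0) (𝓝 0) :=
    ((Continuous.tendsto' (by fun_prop) _ _ (by simp)).mono_left nhdsWithin_le_nhds)
  filter_upwards [herror.eventually_lt_const hε, hstep.eventually_lt_const hr,
    self_mem_nhdsWithin] with t htε htr (ht : t ≠ 0) z hz
  have hremainder := norm_sub_sub_fderiv_le htr (hd.mono (hball z hz))
    fun w hw => hM w (hball z hz hw)
  have hslope : t⁻¹ • (f (z + t • v) - f z) - fderiv ℂ f z v =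
      t⁻¹ • (f (z + t • v) - f z - fderiv ℂ f z (t • v)) := by
    rw [map_smul, smul_sub _ (f (z + t • v) - f z), inv_smul_smul₀ ht]
  rw [dist_comm, dist_eq_norm, hslope, norm_smul, norm_inv]
  calc ‖t‖⁻¹ * ‖f (z + t • v) - f z - fderiv ℂ f z (t • v)‖
      ≤ ‖t‖⁻¹ * (4 * M * (‖t • v‖ / r) ^ 2) := by gcongr
    _ = ‖t‖ * (4 * M * (‖v‖ / r) ^ 2) := by
      rw [norm_smul]; field_simp [norm_ne_zero_iff.2 ht]
    _ < ε := htε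

lemma differentiableOn_fderiv_apply [CompleteSpace F] {f : E → F} {V : Set E} (hV : IsOpen V)
    (hd : DifferentiableOn ℂ f V) (v : E) : DifferentiableOn ℂ (fun z => fderiv ℂ f z v) V := by
  intro x hx
  have hbounded : ∀ᶠ z in 𝓝 x, z ∈ V ∧ ‖f z‖ ≤ ‖f x‖ + 1 :=
    (hV.eventually_mem hx).and
      ((hd.continuousOn.continuousAt (hV.mem_nhds hx)).norm.eventually_le_const (by linarith))
  obtain ⟨R, hR, hball⟩ := Metric.nhds_basis_ball.mem_iff.1 hbounded
  have hsub : ∀ z ∈ Metric.ball x (R / 2), Metric.ball z (R / 2) ⊆ Metric.ball x R := fun z hz =>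
    Metric.ball_subset_ball' (by linarith [Metric.mem_ball.1 hz])
  have hdR : DifferentiableOn ℂ f (Metric.ball x R) := hd.mono fun z hz => (hball hz).1
  have hslope := tendstoUniformlyOn_slope_fderiv (half_pos hR) hsub hdR
    (fun z hz => (hball hz).2) v
  have hsmall : ∀ᶠ t : ℂ in 𝓝[≠] 0, ‖t • v‖ < R / 2 :=
    (Tendsto.eventually_lt_const (half_pos hR) (Continuous.tendsto' (by fun_prop) _ _ (by simp))
      ).filter_mono nhdsWithin_le_nhds
  refine ((differentiableOn_of_tendstoUniformlyOn Metric.isOpen_ball hslope ?_).differentiableAt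
    (Metric.ball_mem_nhds x (half_pos hR))).differentiableWithinAt
  filter_upwards [hsmall] with t ht
  have htranslate : MapsTo (fun z => z + t • v) (Metric.ball x (R / 2)) (Metric.ball x R) :=
    fun z hz => hsub z hz (by simpa using ht)
  exact ((hdR.comp (by fun_prop) htranslate).sub
    (hdR.mono (Metric.ball_subset_ball (by linarith)))).const_smul _

end NormedSpace

section PartialDerivatives

variable {n : ℕ}

/-- The word listing the directions of the successive partial derivatives in `D^ℓ`: each index `i`
occurs `ℓ i` times. It turns facts about `Dml` into inductions on a list. -/
def derivWord (ℓ : Fin n → ℕ) : List (Fin n) :=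
  (List.finRange n).flatMap fun i => List.replicate (ℓ i) i

lemma length_derivWord (ℓ : Fin n → ℕ) : (derivWord ℓ).length = ∑ i, ℓ i := by
  simp [derivWord, Fin.sum_univ_def, List.length_flatMap]

lemma Dml_eq_foldr (ℓ : Fin n → ℕ) (f : (Fin n → ℂ) → ℂ) :
    Dml ℓ f = (derivWord ℓ).foldr pd f := by
  have foldr_replicate (k : ℕ) (i : Fin n) (g : (Fin n → ℂ) → ℂ) :
      (List.replicate k i).foldr pd g = (pd i)^[k] g := by
    induction k with
    | zero => rfl
    | succ k ih => rw [List.replicate_succ, List.foldr_cons, ih, Function.iterate_succ_apply']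
  simp only [derivWord, List.foldr_flatMap, foldr_replicate, Dml]

@[simp]
lemma Dml_zero (f : (Fin n → ℂ) → ℂ) : Dml 0 f = f := by
  have hword : derivWord (0 : Fin n → ℕ) = [] := List.eq_nil_of_length_eq_zero (by
    simp [length_derivWord])
  rw [Dml_eq_foldr, hword, List.foldr_nil]

lemma differentiableOn_pd {f : (Fin n → ℂ) → ℂ} {V : Set (Fin n → ℂ)} (hV : IsOpen V)
    (hf : DifferentiableOn ℂ f V) (i : Fin n) : DifferentiableOn ℂ (pd i f) V :=
  differentiableOn_fderiv_apply hV hf _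

lemma differentiableOn_foldr_pd {f : (Fin n → ℂ) → ℂ} {V : Set (Fin n → ℂ)} (hV : IsOpen V)
    (hf : DifferentiableOn ℂ f V) (w : List (Fin n)) : DifferentiableOn ℂ (w.foldr pd f) V := by
  induction w with
  | nil => exact hf
  | cons i w ih => exact differentiableOn_pd hV ih i

section Limits

variable {ι : Type*} {φ : Filter ι} {F : ι → (Fin n → ℂ) → ℂ} {f : (Fin n → ℂ) → ℂ}
  {V : Set (Fin n → ℂ)}

lemma tendstoLocallyUniformlyOn_pd (hV : IsOpen V) (hF : ∀ᶠ k in φ, DifferentiableOn ℂ (F k) V)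
    (hf : DifferentiableOn ℂ f V) (h : TendstoLocallyUniformlyOn F f φ V) (i : Fin n) :
    TendstoLocallyUniformlyOn (fun k => pd i (F k)) (pd i f) φ V :=
  (ContinuousLinearMap.apply ℂ ℂ
    (Pi.single i 1 : Fin n → ℂ)).uniformContinuous.comp_tendstoLocallyUniformlyOn
      (tendstoLocallyUniformlyOn_fderiv hV h hF hf)

lemma tendstoLocallyUniformlyOn_Dml (hV : IsOpen V) (hF : ∀ᶠ k in φ, DifferentiableOn ℂ (F k) V)
    (hf : DifferentiableOn ℂ f V) (h : TendstoLocallyUniformlyOn F f φ V) (ℓ : Fin n → ℕ) :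
    TendstoLocallyUniformlyOn (fun k => Dml ℓ (F k)) (Dml ℓ f) φ V := by
  simp only [Dml_eq_foldr]
  induction derivWord ℓ with
  | nil => exact h
  | cons i w ih =>
    exact tendstoLocallyUniformlyOn_pd hV
      (hF.mono fun k hk => differentiableOn_foldr_pd hV hk w) (differentiableOn_foldr_pd hV hf w)
      ih i

end Limits

lemma pd_comp_add_smul (g : (Fin n → ℂ) → ℂ) (i : Fin n) (a : Fin n → ℂ) (t : ℂ) :
    pd i (fun z => g (a + t • z)) = fun z => t * pd i g (a + t • z) := by
  ext z
  have hfderiv := fderiv_comp_smul (𝕜 := ℂ) (f := fun w => g (a + w)) (x := z) t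
  rw [fderiv_comp_add_left] at hfderiv
  simp [pd, hfderiv]

lemma pd_const_mul (c : ℂ) (g : (Fin n → ℂ) → ℂ) (i : Fin n) :
    pd i (fun z => c * g z) = fun z => c * pd i g z := by
  ext z
  have hfderiv : fderiv ℂ (fun z => c * g z) z = c • fderiv ℂ g z :=
    congrFun (fderiv_const_smul_field (f := g) c) z
  simp [pd, hfderiv]

lemma Dml_comp_add_smul (f : (Fin n → ℂ) → ℂ) (ℓ : Fin n → ℕ) (a : Fin n → ℂ) (t : ℂ) :
    Dml ℓ (fun z => f (a + t • z)) = fun z => t ^ (∑ i, ℓ i) * Dml ℓ f (a + t • z) := by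
  simp only [Dml_eq_foldr, ← length_derivWord]
  induction derivWord ℓ with
  | nil => simp
  | cons i w ih =>
    rw [List.foldr_cons, ih, pd_const_mul, pd_comp_add_smul]
    ext z
    simp only [List.length_cons, List.foldr_cons]
    ring

end PartialDerivatives

section Polynomials

open MvPolynomial

lemma sum_monomial_coeff_eq {σ R κ : Type*} [CommSemiring R] {s : Finset κ} {N : κ → σ →₀ ℕ}
    (hN : InjOn N s) {p : MvPolynomial σ R} (hp : ∀ m ∈ p.support, ∃ j ∈ s, N j = m) :
    ∑ j ∈ s, monomial (N j) (coeff (N j) p) = p := by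
  classical
  rw [← Finset.sum_image (f := fun m => monomial m (coeff m p)) hN]
  conv_rhs => rw [p.as_sum]
  refine (Finset.sum_subset (fun m hm => Finset.mem_image.2 (hp m hm)) fun m _ hm => ?_).symm
  rw [notMem_support_iff.1 hm, map_zero]

variable {n : ℕ}

section FormalDerivative

variable {R : Type*} [CommSemiring R]

/-- The formal counterpart of `Dml ℓ` on polynomials. -/
def mvDeriv (R : Type*) [CommSemiring R] (ℓ : Fin n → ℕ) : Module.End R (MvPolynomial (Fin n) R) :=
  ((derivWord ℓ).map fun i => (pderiv i).toLinearMap).prod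

lemma prod_factorial_add_single (m : Fin n →₀ ℕ) (j : Fin n) :
    ∏ i, ((m + Finsupp.single j 1 : Fin n →₀ ℕ) i).factorial =
      (m j + 1) * ∏ i, (m i).factorial := by
  rw [← Finset.mul_prod_erase _ _ (Finset.mem_univ j),
    ← Finset.mul_prod_erase _ (fun i => (m i).factorial) (Finset.mem_univ j), ← mul_assoc]
  congr 1
  · simp [Nat.factorial_succ]
  · refine Finset.prod_congr rfl fun i hi => ?_
    simp [Finsupp.single_eq_of_ne (Finset.ne_of_mem_erase hi)]

-- Weighting each coefficient by a multi-index factorial turns differentiation into an index shift.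
lemma coeff_prod_pderiv_mul_factorial (w : List (Fin n)) (p : MvPolynomial (Fin n) R)
    (m : Fin n →₀ ℕ) :
    coeff m ((w.map fun i => (pderiv i).toLinearMap).prod p) * (∏ i, (m i).factorial : ℕ) =
      coeff (m + Multiset.toFinsupp (w : Multiset (Fin n))) p *
        (∏ i, ((m + Multiset.toFinsupp (w : Multiset (Fin n))) i).factorial : ℕ) := by
  induction w generalizing m with
  | nil => simp
  | cons j w ih =>
    have hindex : m + Multiset.toFinsupp (↑(j :: w) : Multiset (Fin n)) =
        m + Finsupp.single j 1 + Multiset.toFinsupp (w : Multiset (Fin n)) := by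
      rw [← Multiset.cons_coe, ← Multiset.singleton_add, Multiset.toFinsupp_add,
        Multiset.toFinsupp_singleton, add_assoc]
    rw [hindex, ← ih, prod_factorial_add_single, List.map_cons, List.prod_cons,
      Module.End.mul_apply, Derivation.coeFn_coe, coeff_pderiv]
    push_cast
    ring

lemma toFinsupp_derivWord (ℓ : Fin n → ℕ) :
    Multiset.toFinsupp (derivWord ℓ : Multiset (Fin n)) = Finsupp.equivFunOnFinite.symm ℓ := by
  ext j
  simp [derivWord, List.count_flatMap, List.count_replicate, Function.comp_def,
    ← Fin.sum_univ_def]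

lemma coeff_mvDeriv_mul_factorial (ℓ : Fin n → ℕ) (p : MvPolynomial (Fin n) R)
    (m : Fin n →₀ ℕ) :
    coeff m (mvDeriv R ℓ p) * (∏ i, (m i).factorial : ℕ) =
      coeff (m + Finsupp.equivFunOnFinite.symm ℓ) p *
        (∏ i, (m i + ℓ i).factorial : ℕ) := by
  simpa [mvDeriv, toFinsupp_derivWord] using coeff_prod_pderiv_mul_factorial (derivWord ℓ) p m

lemma eval_zero_mvDeriv (ℓ : Fin n → ℕ) (p : MvPolynomial (Fin n) R) :
    eval 0 (mvDeriv R ℓ p) =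
      coeff (Finsupp.equivFunOnFinite.symm ℓ) p * (∏ i, (ℓ i).factorial : ℕ) := by
  rw [eval_zero, constantCoeff_eq]
  simpa [constantCoeff_eq] using coeff_mvDeriv_mul_factorial ℓ p 0

lemma finite_setOf_mvDeriv_ne_zero [NoZeroDivisors R] [CharZero R]
    (p : MvPolynomial (Fin n) R) : {ℓ : Fin n → ℕ | mvDeriv R ℓ p ≠ 0}.Finite := by
  refine (p.support.finite_toSet.biUnion fun m _ => finite_Iic (⇑m)).subset fun ℓ hℓ => ?_
  obtain ⟨m, hm⟩ := ne_zero_iff.1 hℓ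
  have hfactorial : ((∏ i, (m i).factorial : ℕ) : R) ≠ 0 :=
    Nat.cast_ne_zero.2 (Finset.prod_ne_zero_iff.2 fun i _ => (m i).factorial_ne_zero)
  have hcoeff : coeff (m + Finsupp.equivFunOnFinite.symm ℓ) p ≠ 0 := left_ne_zero_of_mul
    (coeff_mvDeriv_mul_factorial ℓ p m ▸ mul_ne_zero hm hfactorial)
  exact mem_biUnion (mem_support_iff.2 hcoeff) fun i => by simp

end FormalDerivative

@[simp]
lemma mvEval_C (a : ℂ) : mvEval (C a : MvPolynomial (Fin n) ℂ) = fun _ => a := by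
  ext; simp [mvEval]

@[simp]
lemma mvEval_X (i : Fin n) : mvEval (X i : MvPolynomial (Fin n) ℂ) = fun z => z i := by
  ext; simp [mvEval]

@[simp]
lemma mvEval_add (p q : MvPolynomial (Fin n) ℂ) : mvEval (p + q) = mvEval p + mvEval q := by
  ext; simp [mvEval]

@[simp]
lemma mvEval_mul (p q : MvPolynomial (Fin n) ℂ) : mvEval (p * q) = mvEval p * mvEval q := by
  ext; simp [mvEval]

lemma differentiable_mvEval (p : MvPolynomial (Fin n) ℂ) : Differentiable ℂ (mvEval p) := by
  induction p using MvPolynomial.induction_on with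
  | C a => simp
  | add p q hp hq => simpa using hp.add hq
  | mul_X p i hp => simpa using hp.mul (differentiable_apply i)

@[fun_prop]
lemma continuous_mvEval (p : MvPolynomial (Fin n) ℂ) : Continuous (mvEval p) :=
  (differentiable_mvEval p).continuous

lemma pd_mvEval (i : Fin n) (p : MvPolynomial (Fin n) ℂ) :
    pd i (mvEval p) = mvEval (pderiv i p) := by
  induction p using MvPolynomial.induction_on with
  | C a => ext z; simp [pd, mvEval]
  | add p q hp hq =>
    ext z
    simp [pd, fderiv_add (differentiable_mvEval p z) (differentiable_mvEval q z), ← hp, ← hq]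
  | mul_X p j hp =>
    ext z
    rw [mvEval_mul, mvEval_X, pd,
      fderiv_mul (differentiable_mvEval p z) (differentiableAt_apply j z),
      (hasFDerivAt_apply (𝕜 := ℂ) j z).fderiv]
    have hpz : fderiv ℂ (mvEval p) z (Pi.single i 1) = mvEval (pderiv i p) z := congrFun hp z
    rcases eq_or_ne i j with rfl | hij
    · simp [hpz]
    · simp [hpz, pderiv_X_of_ne hij.symm, hij.symm]

lemma Dml_mvEval (ℓ : Fin n → ℕ) (p : MvPolynomial (Fin n) ℂ) :
    Dml ℓ (mvEval p) = mvEval (mvDeriv ℂ ℓ p) := by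
  rw [Dml_eq_foldr, mvDeriv]
  induction derivWord ℓ with
  | nil => rfl
  | cons i w ih => rw [List.foldr_cons, ih, pd_mvEval]; rfl

/-- The Taylor sum `S_λ(·, ζ)`, written as a polynomial in `z - ζ`; `c ℓ` is the value at the
centre of the derivative of order `ℓ`. -/
def taylorSum (Nj : ℕ → Fin n → ℕ) (c : (Fin n → ℕ) → ℂ) (lam : ℕ) : MvPolynomial (Fin n) ℂ :=
  ∑ j ∈ Finset.range (lam + 1), monomial (Finsupp.equivFunOnFinite.symm (Nj j))
    ((((∏ i, (Nj j i).factorial : ℕ) : ℂ))⁻¹ * c (Nj j))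

lemma pSumExt_eq_mvEval_taylorSum (Nj : ℕ → Fin n → ℕ) (g : (Fin n → ℕ) → (Fin n → ℂ) → ℂ)
    (ζ : Fin n → ℂ) (lam : ℕ) :
    pSumExt Nj g ζ lam = fun z => mvEval (taylorSum Nj (fun ℓ => g ℓ ζ) lam) (z - ζ) := by
  ext z
  simp [pSumExt, taylorSum, mvEval, eval_monomial, Finsupp.prod_fintype]

lemma Dml_comp_sub (f : (Fin n → ℂ) → ℂ) (ℓ : Fin n → ℕ) (ζ : Fin n → ℂ) :
    Dml ℓ (fun z => f (z - ζ)) = fun z => Dml ℓ f (z - ζ) := by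
  simpa [neg_add_eq_sub] using Dml_comp_add_smul f ℓ (-ζ) 1

lemma Dml_pSumExt (Nj : ℕ → Fin n → ℕ) (g : (Fin n → ℕ) → (Fin n → ℂ) → ℂ) (ζ : Fin n → ℂ)
    (lam : ℕ) (ℓ : Fin n → ℕ) (z : Fin n → ℂ) :
    Dml ℓ (pSumExt Nj g ζ lam) z = ∑ j ∈ Finset.range (lam + 1),
      ((((∏ i, (Nj j i).factorial : ℕ) : ℂ))⁻¹ * g (Nj j) ζ) *
        mvEval (mvDeriv ℂ ℓ (monomial (Finsupp.equivFunOnFinite.symm (Nj j)) 1)) (z - ζ) := by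
  rw [pSumExt_eq_mvEval_taylorSum, Dml_comp_sub, Dml_mvEval, taylorSum]
  simp only [mvEval, map_sum]
  refine Finset.sum_congr rfl fun j _ => ?_
  rw [← mul_one (_ * g (Nj j) ζ), ← smul_eq_mul (_ * _) (1 : ℂ), ← smul_monomial, map_smul,
    smul_eval, smul_eq_mul, mul_one]

lemma exists_mvEval_eq_comp_add (p : MvPolynomial (Fin n) ℂ) (ζ : Fin n → ℂ) :
    ∃ q : MvPolynomial (Fin n) ℂ, mvEval q = fun z => mvEval p (z + ζ) := by
  refine ⟨bind₁ (fun i => X i + C (ζ i)) p, funext fun z => ?_⟩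
  induction p using MvPolynomial.induction_on with
  | C a => simp
  | add p q hp hq => simp [hp, hq]
  | mul_X p i hp => simp [hp]

lemma taylorSum_mvEval {Nj : ℕ → Fin n → ℕ} (hNj : Function.Injective Nj)
    {p q : MvPolynomial (Fin n) ℂ} {ζ : Fin n → ℂ} (hq : mvEval q = fun z => mvEval p (z + ζ))
    {lam : ℕ} (hlam : ∀ ℓ, mvDeriv ℂ ℓ p ≠ 0 → ∃ j ≤ lam, Nj j = ℓ) :
    taylorSum Nj (fun ℓ => Dml ℓ (mvEval p) ζ) lam = q := by
  have hcoeff (ℓ : Fin n → ℕ) : Dml ℓ (mvEval p) ζ =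
      coeff (Finsupp.equivFunOnFinite.symm ℓ) q * (∏ i, (ℓ i).factorial : ℕ) := by
    have htranslate := congrFun (Dml_comp_sub (mvEval p) ℓ (-ζ)) 0
    simp only [sub_neg_eq_add, ← hq, zero_add] at htranslate
    rw [← htranslate, Dml_mvEval, mvEval, eval_zero_mvDeriv]
  have hfactorial (ℓ : Fin n → ℕ) : ((∏ i, (ℓ i).factorial : ℕ) : ℂ) ≠ 0 :=
    Nat.cast_ne_zero.2 (Finset.prod_ne_zero_iff.2 fun i _ => (ℓ i).factorial_ne_zero)
  simp only [taylorSum, hcoeff, mul_comm (coeff _ _), inv_mul_cancel_left₀ (hfactorial _)]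
  refine sum_monomial_coeff_eq (Finsupp.equivFunOnFinite.symm.injective.comp hNj).injOn
    fun m hm => ?_
  have hm' : mvDeriv ℂ (⇑m) p ≠ 0 := fun h0 => by
    have hm0 := hcoeff m
    rw [Dml_mvEval, h0] at hm0
    exact mul_ne_zero (mem_support_iff.1 hm) (hfactorial m) (by simpa [mvEval] using hm0.symm)
  obtain ⟨j, hj, hjm⟩ := hlam _ hm'
  exact ⟨j, Finset.mem_range_succ_iff.2 hj, by simp [hjm]⟩

lemma eventually_pSumExt_Dml_mvEval {Nj : ℕ → Fin n → ℕ} (hNj : Function.Bijective Nj)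
    (p : MvPolynomial (Fin n) ℂ) :
    ∀ᶠ lam in atTop, ∀ ζ, pSumExt Nj (fun ℓ => Dml ℓ (mvEval p)) ζ lam = mvEval p := by
  obtain ⟨lam₀, hlam₀⟩ := ((finite_setOf_mvDeriv_ne_zero p).preimage hNj.injective.injOn).bddAbove
  filter_upwards [eventually_ge_atTop lam₀] with lam hlam ζ
  obtain ⟨q, hq⟩ := exists_mvEval_eq_comp_add p ζ
  have hsum : taylorSum Nj (fun ℓ => Dml ℓ (mvEval p) ζ) lam = q :=
    taylorSum_mvEval hNj.injective hq fun ℓ hℓ => by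
      obtain ⟨j, rfl⟩ := hNj.surjective ℓ
      exact ⟨j, (hlam₀ hℓ).trans hlam, rfl⟩
  simp [pSumExt_eq_mvEval_taylorSum, hsum, hq]

end Polynomials

section BanachValued

variable {E : Type*} [NormedAddCommGroup E] [NormedSpace ℂ E]

lemma hasDerivAt_continuousMap {X : Type*} [TopologicalSpace X] [CompactSpace X]
    {F : ℂ → C(X, E)} {F' : C(X, E)} {s : ℂ} (hF : ContinuousAt F s)
    (hd : ∀ᶠ t in 𝓝 s, ∀ x, DifferentiableAt ℂ (fun t => F t x) t)
    (hF' : ∀ x, HasDerivAt (fun t => F t x) (F' x) s) : HasDerivAt F F' s := by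
  have hbounded := hd.and (hF.norm.eventually_le_const (lt_add_one ‖F s‖))
  obtain ⟨r, hr, hball⟩ := Metric.nhds_basis_ball.mem_iff.1 hbounded
  rw [hasDerivAt_iff_isLittleO_nhds_zero]
  refine (Asymptotics.IsBigO.of_bound (4 * (‖F s‖ + 1) / r ^ 2) ?_).trans_isLittleO
    (Asymptotics.isLittleO_pow_id (𝕜 := ℂ) one_lt_two)
  filter_upwards [Metric.ball_mem_nhds (0 : ℂ) hr] with h hh
  rw [ContinuousMap.norm_le _ (by positivity)]
  intro x
  have hremainder := norm_sub_sub_fderiv_le (f := fun t => F t x) (mem_ball_zero_iff.1 hh)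
    (fun t ht => ((hball ht).1 x).differentiableWithinAt)
    (fun t ht => ((F t).norm_coe_le_norm x).trans (hball ht).2)
  rw [(hF' x).hasFDerivAt.fderiv] at hremainder
  calc ‖F (s + h) x - F s x - h • F' x‖ ≤ 4 * (‖F s‖ + 1) * (‖h‖ / r) ^ 2 := hremainder
    _ = 4 * (‖F s‖ + 1) / r ^ 2 * ‖h ^ 2‖ := by rw [norm_pow]; ring

lemma mem_submodule_of_iteratedDeriv_mem [CompleteSpace E] {S : Submodule ℂ E}
    (hS : IsClosed (S : Set E)) {F : ℂ → E} {O C : Set ℂ} {a : ℂ} (hO : IsOpen O)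
    (hF : DifferentiableOn ℂ F O) (hC : IsPreconnected C) (hCO : C ⊆ O) (ha : a ∈ C)
    (hmem : ∀ k, iteratedDeriv k F a ∈ S) {s : ℂ} (hs : s ∈ C) : F s ∈ S := by
  have : IsClosed (S : Set E) := hS
  obtain ⟨r, hr, hrO⟩ := Metric.isOpen_iff.1 hO a (hCO ha)
  have mem_near : ∀ t ∈ Metric.ball a r, F t ∈ S := fun t ht =>
    hS.mem_of_tendsto (Complex.hasSum_taylorSeries_on_ball (hF.mono hrO) ht) (.of_forall fun _ =>
      S.sum_mem fun k _ => S.smul_mem _ (S.smul_mem _ (hmem k)))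
  have hanalytic : AnalyticOnNhd ℂ (S.mkQL ∘ F) C :=
    S.mkQL.comp_analyticOnNhd ((hF.analyticOnNhd hO).mono hCO)
  have hzero : S.mkQL ∘ F =ᶠ[𝓝 a] 0 := by
    filter_upwards [Metric.ball_mem_nhds a hr] with t ht
    exact (Submodule.Quotient.mk_eq_zero S).2 (mem_near t ht)
  exact (Submodule.Quotient.mk_eq_zero S).1
    (hanalytic.eqOn_zero_of_preconnected_of_eventuallyEq_zero hC ha hzero hs)

end BanachValued

section PolynomialApproximation

open MvPolynomial

variable {n : ℕ}

lemma clm_apply_eq_sum_single (φ : (Fin n → ℂ) →L[ℂ] ℂ) (v : Fin n → ℂ) :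
    φ v = ∑ i, v i * φ (Pi.single i 1) := by
  conv_lhs => rw [← Finset.univ_sum_single v, map_sum]
  refine Finset.sum_congr rfl fun i _ => ?_
  rw [← smul_eq_mul, ← map_smul, ← Pi.single_smul, smul_eq_mul, mul_one]

/-- `f` is a uniform limit of holomorphic polynomials on `X`. -/
def IsPolyApprox (X : Set (Fin n → ℂ)) (f : (Fin n → ℂ) → ℂ) : Prop :=
  ∀ ε > 0, ∃ Q : MvPolynomial (Fin n) ℂ, ∀ z ∈ X, ‖mvEval Q z - f z‖ < ε

/-- Restriction of polynomials to a subset of `ℂⁿ`. -/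
def polyRestrict (X : Set (Fin n → ℂ)) : MvPolynomial (Fin n) ℂ →ₐ[ℂ] C(X, ℂ) :=
  aeval fun i => ⟨fun z => z.1 i, (continuous_apply i).comp continuous_subtype_val⟩

@[simp]
lemma polyRestrict_apply {X : Set (Fin n → ℂ)} (Q : MvPolynomial (Fin n) ℂ) (z : X) :
    polyRestrict X Q z = mvEval Q z := by
  induction Q using MvPolynomial.induction_on with
  | C a => simp [polyRestrict]
  | add p q hp hq => simp [hp, hq]
  | mul_X p i hp =>
    have hX : polyRestrict X (MvPolynomial.X i) z = z.1 i := by simp [polyRestrict]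
    simp [hp, hX]

/-- The uniform algebra usually denoted `P(X)`: the closure of the polynomials in `C(X, ℂ)`. -/
def polyClosure (X : Set (Fin n → ℂ)) [CompactSpace X] : Subalgebra ℂ C(X, ℂ) :=
  (polyRestrict X).range.topologicalClosure

lemma polyRestrict_mem_polyClosure (X : Set (Fin n → ℂ)) [CompactSpace X]
    (Q : MvPolynomial (Fin n) ℂ) :
    polyRestrict X Q ∈ polyClosure X :=
  Subalgebra.le_topologicalClosure _ ⟨Q, rfl⟩

lemma isPolyApprox_of_mem_polyClosure {X : Set (Fin n → ℂ)} [CompactSpace X]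
    {f : (Fin n → ℂ) → ℂ} {F : C(X, ℂ)} (hF : F ∈ polyClosure X) (hf : ∀ z : X, F z = f z) :
    IsPolyApprox X f := by
  intro ε hε
  obtain ⟨_, ⟨Q, rfl⟩, hQ⟩ := Metric.mem_closure_iff.1 hF ε hε
  refine ⟨Q, fun z hz => ?_⟩
  rw [dist_comm, dist_eq_norm] at hQ
  simpa [hf] using ((polyRestrict X Q - F).norm_coe_le_norm ⟨z, hz⟩).trans_lt hQ

section Runge

variable {V L : Set (Fin n → ℂ)} {z₀ : Fin n → ℂ}

/-- The dilates `z ↦ h (z₀ + s • (z - z₀))` restricted to `L`, as a curve in `C(L, ℂ)` with complex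
parameter `s`; it takes the junk value `0` where the dilate is not continuous on `L`. -/
def dilateCurve (L : Set (Fin n → ℂ)) (z₀ : Fin n → ℂ) (h : (Fin n → ℂ) → ℂ) (s : ℂ) : C(L, ℂ) :=
  ContinuousMap.mkD (L.domRestrict fun z => h (z₀ + s • (z - z₀))) 0

/-- The parameters `s` for which the dilation by `s` about `z₀` maps `L` into `V`. -/
def dilateDomain (L V : Set (Fin n → ℂ)) (z₀ : Fin n → ℂ) : Set ℂ :=
  {s | ∀ z ∈ L, z₀ + s • (z - z₀) ∈ V}

lemma dilateCurve_apply {h : (Fin n → ℂ) → ℂ} (hh : ContinuousOn h V) {s : ℂ}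
    (hs : s ∈ dilateDomain L V z₀) (z : L) :
    dilateCurve L z₀ h s z = h (z₀ + s • (z.1 - z₀)) :=
  ContinuousMap.mkD_apply_of_continuousOn (f := fun z => h (z₀ + s • (z - z₀)))
    (hh.comp (by fun_prop) hs)

lemma continuousOn_dilateCurve {h : (Fin n → ℂ) → ℂ} (hh : ContinuousOn h V) :
    ContinuousOn (dilateCurve L z₀ h) (dilateDomain L V z₀) :=
  ContinuousMap.continuousOn_mkD_restrict_of_uncurry _ _
    (hh.comp (by fun_prop) fun p hp => hp.1 p.2 hp.2)

variable [CompactSpace L]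

lemma isOpen_dilateDomain (hV : IsOpen V) : IsOpen (dilateDomain L V z₀) := by
  have hL : IsCompact L := isCompact_iff_compactSpace.2 inferInstance
  refine isOpen_iff_mem_nhds.2 fun s hs =>
    hL.eventually_forall_of_forall_eventually fun z hz => ?_
  have hcont : Continuous fun p : ℂ × (Fin n → ℂ) => z₀ + p.1 • (p.2 - z₀) := by fun_prop
  exact (hcont.tendsto (s, z)).eventually (hV.mem_nhds (hs z hz))

lemma hasDerivAt_dilateCurve (hV : IsOpen V) {h : (Fin n → ℂ) → ℂ}
    (hh : DifferentiableOn ℂ h V) {s : ℂ} (hs : s ∈ dilateDomain L V z₀) :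
    HasDerivAt (dilateCurve L z₀ h)
      (∑ i, polyRestrict L (X i - C (z₀ i)) * dilateCurve L z₀ (pd i h) s) s := by
  have hO : dilateDomain L V z₀ ∈ 𝓝 s := (isOpen_dilateDomain hV).mem_nhds hs
  have pointwise : ∀ t ∈ dilateDomain L V z₀, ∀ z : L, HasDerivAt (dilateCurve L z₀ h · z)
      (fderiv ℂ h (z₀ + t • (z.1 - z₀)) (z.1 - z₀)) t := fun t ht z => by
    have hline : HasDerivAt (fun t : ℂ => z₀ + t • (z.1 - z₀)) (z.1 - z₀) t := by
      simpa using ((hasDerivAt_id t).smul_const (z.1 - z₀)).const_add z₀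
    refine ((hh.differentiableAt (hV.mem_nhds (ht z z.2))).hasFDerivAt.comp_hasDerivAt t
      hline).congr_of_eventuallyEq ?_
    filter_upwards [(isOpen_dilateDomain hV).mem_nhds ht] with t' ht'
    exact dilateCurve_apply hh.continuousOn ht' z
  refine hasDerivAt_continuousMap ((continuousOn_dilateCurve hh.continuousOn).continuousAt hO)
    (eventually_of_mem hO fun t ht z => (pointwise t ht z).differentiableAt) fun z => ?_
  refine (pointwise s hs z).congr_deriv ?_
  rw [clm_apply_eq_sum_single, ContinuousMap.sum_apply]
  refine Finset.sum_congr rfl fun i _ => ?_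
  rw [ContinuousMap.mul_apply, polyRestrict_apply,
    dilateCurve_apply (differentiableOn_pd hV hh i).continuousOn hs, pd]
  simp [mvEval]

lemma iteratedDeriv_dilateCurve_mem_polyClosure (hV : IsOpen V)
    (h0 : 0 ∈ dilateDomain L V z₀) (k : ℕ) {h : (Fin n → ℂ) → ℂ} (hh : DifferentiableOn ℂ h V) :
    iteratedDeriv k (dilateCurve L z₀ h) 0 ∈ polyClosure L := by
  have hO : dilateDomain L V z₀ ∈ 𝓝 0 := (isOpen_dilateDomain hV).mem_nhds h0
  induction k generalizing h with
  | zero =>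
    have hconst : dilateCurve L z₀ h 0 = polyRestrict L (C (h z₀)) := by
      ext z
      simp [dilateCurve_apply hh.continuousOn h0]
    simp [hconst]
  | succ k ih =>
    have hderiv : deriv (dilateCurve L z₀ h) =ᶠ[𝓝 0]
        fun s => ∑ i, polyRestrict L (X i - C (z₀ i)) * dilateCurve L z₀ (pd i h) s :=
      eventually_of_mem hO fun s hs => (hasDerivAt_dilateCurve hV hh hs).deriv
    have hsmooth (i : Fin n) : ContDiffAt ℂ k (dilateCurve L z₀ (pd i h)) 0 :=
      (DifferentiableOn.contDiffOn (fun s hs =>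
        (hasDerivAt_dilateCurve hV (differentiableOn_pd hV hh i)
          hs).differentiableAt.differentiableWithinAt)
        (isOpen_dilateDomain hV)).contDiffAt hO
    rw [iteratedDeriv_succ', hderiv.iteratedDeriv_eq,
      iteratedDeriv_fun_sum fun i _ => contDiffAt_const.mul (hsmooth i)]
    refine sum_mem fun i _ => ?_
    rw [iteratedDeriv_const_mul _ (hsmooth i)]
    exact mul_mem (polyRestrict_mem_polyClosure L _) (ih (differentiableOn_pd hV hh i))

theorem isPolyApprox_of_starConvex (hV : IsOpen V) (hVs : StarConvex ℝ z₀ V) (hLV : L ⊆ V)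
    {h : (Fin n → ℂ) → ℂ} (hh : DifferentiableOn ℂ h V) : IsPolyApprox L h := by
  have hCO : (fun s : ℝ => (s : ℂ)) '' Icc 0 1 ⊆ dilateDomain L V z₀ := by
    rintro _ ⟨s, hs, rfl⟩ z hz
    simpa using hVs.add_smul_sub_mem (hLV hz) hs.1 hs.2
  have h0 : (0 : ℂ) ∈ (fun s : ℝ => (s : ℂ)) '' Icc 0 1 := ⟨0, by simp⟩
  have h1 : (1 : ℂ) ∈ (fun s : ℝ => (s : ℂ)) '' Icc 0 1 := ⟨1, by simp⟩
  have hmem : dilateCurve L z₀ h 1 ∈ polyClosure L :=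
    mem_submodule_of_iteratedDeriv_mem (S := Subalgebra.toSubmodule (polyClosure L))
      (Subalgebra.isClosed_topologicalClosure _) (isOpen_dilateDomain hV)
      (fun s hs => (hasDerivAt_dilateCurve hV hh hs).differentiableAt.differentiableWithinAt)
      (isPreconnected_Icc.image _ (by fun_prop)) hCO h0
      (fun k => iteratedDeriv_dilateCurve_mem_polyClosure hV (hCO h0) k hh) h1
  exact isPolyApprox_of_mem_polyClosure hmem fun z => by
    simp [dilateCurve_apply hh.continuousOn (hCO h1)]

end Runge

end PolynomialApproximation

section HalfPlaneStep

lemma norm_sub_one_lt_norm_add_one_iff {w : ℂ} : ‖w - 1‖ < ‖w + 1‖ ↔ 0 < w.re := by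
  rw [← sq_lt_sq₀ (norm_nonneg _) (norm_nonneg _), ← Complex.normSq_eq_norm_sq,
    ← Complex.normSq_eq_norm_sq, Complex.normSq_apply, Complex.normSq_apply]
  simp only [Complex.sub_re, Complex.add_re, Complex.one_re, Complex.sub_im, Complex.add_im,
    Complex.one_im]
  constructor <;> intro h <;> linarith

lemma norm_add_one_lt_norm_sub_one_iff {w : ℂ} : ‖w + 1‖ < ‖w - 1‖ ↔ w.re < 0 := by
  have h := norm_sub_one_lt_norm_add_one_iff (w := -w)
  rwa [← neg_add', norm_neg, neg_add_eq_sub, norm_sub_rev, Complex.neg_re, neg_pos] at h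

lemma norm_eq_of_pow_add_pow_eq_zero {𝕜 : Type*} [NormedField 𝕜] {a b : 𝕜} {N : ℕ} (hN : N ≠ 0)
    (h : a ^ N + b ^ N = 0) : ‖a‖ = ‖b‖ :=
  (pow_left_inj₀ (norm_nonneg _) (norm_nonneg _) hN).1 (by
    rw [← norm_pow, ← norm_pow, eq_neg_of_add_eq_zero_left h, norm_neg])

lemma tendstoUniformlyOn_pow_div_pow_add_pow {X 𝕜 : Type*} [TopologicalSpace X] [NormedField 𝕜]
    {s : Set X} {a b : X → 𝕜} (hs : IsCompact s) (ha : ContinuousOn a s) (hb : ContinuousOn b s)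
    (hab : ∀ x ∈ s, ‖a x‖ < ‖b x‖) :
    TendstoUniformlyOn (fun (N : ℕ) x => a x ^ N / (a x ^ N + b x ^ N)) 0 atTop s := by
  have hb0 : ∀ x ∈ s, b x ≠ 0 := fun x hx =>
    norm_pos_iff.1 ((norm_nonneg _).trans_lt (hab x hx))
  obtain ⟨q, hq0, hq1, hq⟩ : ∃ q : ℝ, 0 ≤ q ∧ q < 1 ∧ ∀ x ∈ s, ‖a x / b x‖ ≤ q := by
    obtain rfl | hne := s.eq_empty_or_nonempty
    · exact ⟨0, le_rfl, one_pos, by simp⟩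
    obtain ⟨x, hx, hmax⟩ := hs.exists_isMaxOn hne (ha.div hb hb0).norm
    refine ⟨_, norm_nonneg _, ?_, fun y hy => hmax hy⟩
    rw [Pi.div_apply, norm_div]
    exact (div_lt_one (norm_pos_iff.2 (hb0 x hx))).2 (hab x hx)
  have hpow := tendsto_pow_atTop_nhds_zero_of_lt_one hq0 hq1
  have hlim : Tendsto (fun N : ℕ => q ^ N / (1 - q ^ N)) atTop (𝓝 0) := by
    simpa [Pi.div_def] using hpow.div (hpow.const_sub 1) (by simp)
  rw [Metric.tendstoUniformlyOn_iff]
  intro ε hε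
  filter_upwards [hlim.eventually_lt_const hε, hpow.eventually_lt_const one_pos] with N hNε hN1 x hx
  have hratio : a x ^ N / (a x ^ N + b x ^ N) = (a x / b x) ^ N / (1 + (a x / b x) ^ N) := by
    have := pow_ne_zero N (hb0 x hx)
    rw [div_pow, one_add_div this, div_div_div_cancel_right₀ this, add_comm]
  have hnum : ‖(a x / b x) ^ N‖ ≤ q ^ N := by
    rw [norm_pow]
    exact pow_le_pow_left₀ (norm_nonneg _) (hq x hx) N
  have hden : 1 - q ^ N ≤ ‖1 + (a x / b x) ^ N‖ := by
    have := norm_sub_le_norm_add (1 : 𝕜) ((a x / b x) ^ N)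
    rw [norm_one] at this
    linarith
  rw [Pi.zero_apply, dist_zero_left, hratio, norm_div]
  exact (div_le_div₀ (by positivity) hnum (by linarith) hden).trans_lt hNε

/-- The rational functions `(w + 1)^N / ((w + 1)^N + (w - 1)^N)`, which approximate the indicator
function of the right half-plane off the imaginary axis. -/
def halfPlaneStep (N : ℕ) (w : ℂ) : ℂ := (w + 1) ^ N / ((w + 1) ^ N + (w - 1) ^ N)

lemma pow_add_pow_ne_zero_of_re_ne_zero {w : ℂ} (hw : w.re ≠ 0) {N : ℕ} (hN : N ≠ 0) :
    (w + 1) ^ N + (w - 1) ^ N ≠ 0 := fun h => by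
  have hnorm := norm_eq_of_pow_add_pow_eq_zero hN h
  exact hw.lt_or_gt.elim (fun hlt => (norm_add_one_lt_norm_sub_one_iff.2 hlt).ne hnorm)
    fun hgt => (norm_sub_one_lt_norm_add_one_iff.2 hgt).ne hnorm.symm

lemma tendstoUniformlyOn_halfPlaneStep_zero {s : Set ℂ} (hs : IsCompact s)
    (hneg : ∀ w ∈ s, w.re < 0) : TendstoUniformlyOn halfPlaneStep 0 atTop s :=
  tendstoUniformlyOn_pow_div_pow_add_pow hs (by fun_prop) (by fun_prop)
    fun w hw => norm_add_one_lt_norm_sub_one_iff.2 (hneg w hw)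

lemma tendstoUniformlyOn_halfPlaneStep_one {s : Set ℂ} (hs : IsCompact s)
    (hpos : ∀ w ∈ s, 0 < w.re) : TendstoUniformlyOn halfPlaneStep 1 atTop s := by
  have hlim := tendstoUniformlyOn_pow_div_pow_add_pow (a := fun w : ℂ => w - 1)
    (b := fun w => w + 1) hs (by fun_prop) (by fun_prop)
    fun w hw => norm_sub_one_lt_norm_add_one_iff.2 (hpos w hw)
  rw [Metric.tendstoUniformlyOn_iff] at hlim ⊢
  intro ε hε
  filter_upwards [hlim ε hε, eventually_ne_atTop 0] with N hN hN0 w hw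
  have hcompl : 1 - halfPlaneStep N w = (w - 1) ^ N / ((w - 1) ^ N + (w + 1) ^ N) := by
    rw [halfPlaneStep, one_sub_div (pow_add_pow_ne_zero_of_re_ne_zero (hpos w hw).ne' hN0),
      add_sub_cancel_left, add_comm]
  have hdist := hN w hw
  rwa [Pi.zero_apply, dist_zero_left, ← hcompl, ← dist_eq_norm] at hdist

-- Passing from `C(X, ℂ)` to `S` only fills bounded components of the resolvent set, and the one
-- containing the imaginary axis is unbounded.
lemma re_ne_zero_of_mem_spectrum {X : Type*} [TopologicalSpace X] [CompactSpace X] [Nonempty X]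
    (S : Subalgebra ℂ C(X, ℂ)) [IsClosed (S : Set C(X, ℂ))] {F : S}
    (hF : ∀ x, ((F : C(X, ℂ)) x).re ≠ 0) {k : ℂ} (hk : k ∈ spectrum ℂ F) : k.re ≠ 0 := by
  intro hre
  have hsub : {z : ℂ | z.re = 0} ⊆ (spectrum ℂ (F : C(X, ℂ)))ᶜ := by
    rw [ContinuousMap.spectrum_eq_range]
    rintro _ hz ⟨x, rfl⟩
    exact hF x hz
  have haxis : Convex ℝ {z : ℂ | z.re = 0} := convex_hyperplane Complex.reLm.isLinear 0
  have hbounded := (Subalgebra.spectrum_isBounded_connectedComponentIn S F hk).subset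
    (haxis.isPreconnected.subset_connectedComponentIn hre hsub)
  obtain ⟨B, hB⟩ := hbounded.exists_norm_le
  have hle := hB ((|B| + 1 : ℝ) * Complex.I) (by simp)
  rw [norm_mul, Complex.norm_I, mul_one, Complex.norm_real, Real.norm_eq_abs,
    abs_of_nonneg (by positivity)] at hle
  linarith [le_abs_self B]

lemma exists_mem_subalgebra_eq_halfPlaneStep {X : Type*} [TopologicalSpace X] [CompactSpace X]
    [Nonempty X] (S : Subalgebra ℂ C(X, ℂ)) [hS : IsClosed (S : Set C(X, ℂ))] {F : C(X, ℂ)}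
    (hFS : F ∈ S) (hF : ∀ x, (F x).re ≠ 0) {N : ℕ} (hN : N ≠ 0) :
    ∃ G ∈ S, ∀ x, G x = halfPlaneStep N (F x) := by
  have := hS.completeSpace_coe
  let f : S := ⟨F, hFS⟩
  let p : Polynomial ℂ := (Polynomial.X + 1) ^ N + (Polynomial.X - 1) ^ N
  have hp : Polynomial.aeval f p = (f + 1) ^ N + (f - 1) ^ N := by simp [p]
  have hunit : IsUnit ((f + 1) ^ N + (f - 1) ^ N) := by
    rw [← hp]
    by_contra hnonunit
    have hzero := (spectrum.zero_mem_iff ℂ).2 hnonunit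
    rw [spectrum.map_polynomial_aeval] at hzero
    obtain ⟨k, hk, hroot⟩ := hzero
    exact pow_add_pow_ne_zero_of_re_ne_zero (re_ne_zero_of_mem_spectrum S hF hk) hN
      (by simpa [p] using hroot)
  obtain ⟨g, hg⟩ := hunit.exists_left_inv
  refine ⟨_, (g * (f + 1) ^ N).2, fun x => ?_⟩
  have hgx : (g : C(X, ℂ)) x * ((F x + 1) ^ N + (F x - 1) ^ N) = 1 := by
    simpa [f] using congrArg (fun u : S => (u : C(X, ℂ)) x) hg
  rw [halfPlaneStep, eq_div_iff (pow_add_pow_ne_zero_of_re_ne_zero (hF x) hN)]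
  simp only [MulMemClass.coe_mul, ContinuousMap.mul_apply, SubmonoidClass.coe_pow,
    AddMemClass.coe_add, OneMemClass.coe_one, ContinuousMap.pow_apply, ContinuousMap.add_apply,
    ContinuousMap.one_apply, f]
  linear_combination (F x + 1) ^ N * hgx

end HalfPlaneStep

section PiecewiseApproximation

open MvPolynomial

variable {n : ℕ} {K L : Set (Fin n → ℂ)}

lemma exists_mvEval_re_neg_pos (hL : IsCompact L) (hLc : Convex ℝ L) (hK : IsClosed K)
    (hKc : Convex ℝ K) (hLK : Disjoint L K) :
    ∃ W : MvPolynomial (Fin n) ℂ,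
      (∀ z ∈ L, (mvEval W z).re < 0) ∧ ∀ z ∈ K, 0 < (mvEval W z).re := by
  obtain ⟨φ, u, v, hLu, huv, hvK⟩ :=
    RCLike.geometric_hahn_banach_compact_closed (𝕜 := ℂ) hLc hL hKc hK hLK
  refine ⟨∑ i, X i * C (φ (Pi.single i 1)) - C (u : ℂ), fun z hz => ?_, fun z hz => ?_⟩
  all_goals
    have heval : mvEval (∑ i, X i * C (φ (Pi.single i 1)) - C (u : ℂ)) z = φ z - u := by
      simp [mvEval, clm_apply_eq_sum_single φ z]
    rw [heval, Complex.sub_re, Complex.ofReal_re]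
  · exact sub_neg.2 (hLu z hz)
  · exact sub_pos.2 (huv.trans (hvK z hz))

lemma isPolyApprox_halfPlaneStep {X : Set (Fin n → ℂ)} (hX : IsCompact X)
    {W : MvPolynomial (Fin n) ℂ} (hW : ∀ z ∈ X, (mvEval W z).re ≠ 0) {N : ℕ} (hN : N ≠ 0) :
    IsPolyApprox X fun z => halfPlaneStep N (mvEval W z) := by
  obtain rfl | hne := X.eq_empty_or_nonempty
  · exact fun ε _ => ⟨0, by simp⟩
  have := isCompact_iff_compactSpace.1 hX
  have := hne.to_subtype
  have hclosed : IsClosed (polyClosure X : Set C(X, ℂ)) := Subalgebra.isClosed_topologicalClosure _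
  obtain ⟨G, hG, hGstep⟩ := exists_mem_subalgebra_eq_halfPlaneStep (polyClosure X)
    (polyRestrict_mem_polyClosure X W) (by simpa using hW) hN
  exact isPolyApprox_of_mem_polyClosure hG (by simpa using hGstep)

lemma exists_mvEval_near_zero_near_one (hL : IsCompact L) (hLc : Convex ℝ L) (hK : IsCompact K)
    (hKc : Convex ℝ K) (hLK : Disjoint L K) {ε : ℝ} (hε : 0 < ε) :
    ∃ H : MvPolynomial (Fin n) ℂ,
      (∀ z ∈ L, ‖mvEval H z‖ < ε) ∧ ∀ z ∈ K, ‖mvEval H z - 1‖ < ε := by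
  obtain ⟨W, hWL, hWK⟩ := exists_mvEval_re_neg_pos hL hLc hK.isClosed hKc hLK
  have step_zero := tendstoUniformlyOn_halfPlaneStep_zero
    (hL.image (continuous_mvEval W)) (forall_mem_image.2 hWL)
  have step_one := tendstoUniformlyOn_halfPlaneStep_one
    (hK.image (continuous_mvEval W)) (forall_mem_image.2 hWK)
  obtain ⟨N, hN, hNL, hNK⟩ := ((eventually_ne_atTop 0).and
    ((Metric.tendstoUniformlyOn_iff.1 step_zero _ (half_pos hε)).and
      (Metric.tendstoUniformlyOn_iff.1 step_one _ (half_pos hε)))).exists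
  obtain ⟨H, hH⟩ := isPolyApprox_halfPlaneStep (hL.union hK) (W := W)
    (fun z hz => hz.elim (fun hz => (hWL z hz).ne) fun hz => (hWK z hz).ne') hN _ (half_pos hε)
  refine ⟨H, fun z hz => ?_, fun z hz => ?_⟩
  · have hstep := hNL _ (mem_image_of_mem _ hz)
    rw [Pi.zero_apply, dist_zero_left] at hstep
    linarith [hH z (.inl hz), norm_sub_norm_le (mvEval H z) (halfPlaneStep N (mvEval W z))]
  · have hstep := hNK _ (mem_image_of_mem _ hz)
    rw [Pi.one_apply, dist_comm, dist_eq_norm] at hstep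
    linarith [hH z (.inr hz),
      norm_sub_le_norm_sub_add_norm_sub (mvEval H z) (halfPlaneStep N (mvEval W z)) 1]

lemma IsPolyApprox.exists_near_near {f g : (Fin n → ℂ) → ℂ} (hf : IsPolyApprox L f)
    (hg : IsPolyApprox K g) (hL : IsCompact L) (hLc : Convex ℝ L) (hK : IsCompact K)
    (hKc : Convex ℝ K) (hLK : Disjoint L K) {ε : ℝ} (hε : 0 < ε) :
    ∃ Q : MvPolynomial (Fin n) ℂ,
      (∀ z ∈ L, ‖mvEval Q z - f z‖ < ε) ∧ ∀ z ∈ K, ‖mvEval Q z - g z‖ < ε := by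
  obtain ⟨p, hp⟩ := hf _ (half_pos hε)
  obtain ⟨q, hq⟩ := hg _ (half_pos hε)
  obtain ⟨B, hB⟩ :=
    (hL.union hK).exists_bound_of_continuousOn (continuous_mvEval (q - p)).continuousOn
  let M := max B 1
  have hM (z) (hz : z ∈ L ∪ K) : ‖mvEval (q - p) z‖ ≤ M := (hB z hz).trans (le_max_left _ _)
  have hM0 : 0 < M := lt_max_of_lt_right one_pos
  have hMε : M * (ε / 2 / M) = ε / 2 := mul_div_cancel₀ _ hM0.ne'
  obtain ⟨H, hHL, hHK⟩ := exists_mvEval_near_zero_near_one hL hLc hK hKc hLK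
    (div_pos (half_pos hε) hM0)
  refine ⟨p + (q - p) * H, fun z hz => ?_, fun z hz => ?_⟩
  · calc ‖mvEval (p + (q - p) * H) z - f z‖
        = ‖(mvEval p z - f z) + mvEval (q - p) z * mvEval H z‖ := by
          simp only [mvEval, map_add, map_mul, map_sub]; ring_nf
      _ ≤ ‖mvEval p z - f z‖ + ‖mvEval (q - p) z‖ * ‖mvEval H z‖ := by
          rw [← norm_mul]; exact norm_add_le _ _
      _ < ε / 2 + M * (ε / 2 / M) := add_lt_add_of_lt_of_le (hp z hz)
          (mul_le_mul (hM z (.inl hz)) (hHL z hz).le (norm_nonneg _) hM0.le)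
      _ = ε := by rw [hMε, add_halves]
  · calc ‖mvEval (p + (q - p) * H) z - g z‖
        = ‖(mvEval q z - g z) + mvEval (q - p) z * (mvEval H z - 1)‖ := by
          simp only [mvEval, map_add, map_mul, map_sub]; ring_nf
      _ ≤ ‖mvEval q z - g z‖ + ‖mvEval (q - p) z‖ * ‖mvEval H z - 1‖ := by
          rw [← norm_mul]; exact norm_add_le _ _
      _ < ε / 2 + M * (ε / 2 / M) := add_lt_add_of_lt_of_le (hq z hz)
          (mul_le_mul (hM z (.inr hz)) (hHK z hz).le (norm_nonneg _) hM0.le)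
      _ = ε := by rw [hMε, add_halves]

end PiecewiseApproximation

section Topology

variable {n : ℕ} {Ω : Set (Fin n → ℂ)}

lemma tendsto_continuousMap_iff_tendstoUniformlyOn {X β ι : Type*} [TopologicalSpace X]
    [UniformSpace β] {s : Set X} {φ : Filter ι} {u : ι → C(s, β)} {v : C(s, β)}
    {F : ι → X → β} {g : X → β} (hu : ∀ k (z : s), u k z = F k z) (hv : ∀ z : s, v z = g z) :
    Tendsto u φ (𝓝 v) ↔ ∀ L ⊆ s, IsCompact L → TendstoUniformlyOn F g φ L := by
  have key (C : Set s) : TendstoUniformlyOn (fun k z => u k z) v φ C ↔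
      TendstoUniformlyOn F g φ (Subtype.val '' C) := by
    simp only [TendstoUniformlyOn, forall_mem_image, hu, hv]
  rw [ContinuousMap.tendsto_iff_forall_isCompact_tendstoUniformlyOn]
  refine ⟨fun h L hLs hL => ?_, fun h C hC => ?_⟩
  · have hval : (Subtype.val '' (Subtype.val ⁻¹' L : Set s)) = L := by
      simpa [Subtype.image_preimage_val] using hLs
    rw [← hval]
    exact (key _).1 (h _ (Subtype.isCompact_iff.2 (hval.symm ▸ hL)))
  · exact (key C).2 (h _ (Subtype.coe_image_subset s C) (hC.image continuous_subtype_val))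

/-- The family of extended derivatives of `f`; the topology of `A^∞(Ω)` is induced by this map. -/
def AinfEmb (f : AinfSpace n Ω) : (Fin n → ℕ) → C(closure Ω, ℂ) := fun ℓ =>
  ⟨(closure Ω).domRestrict (AinfExt f ℓ),
    continuousOn_iff_continuous_domRestrict.mp (AinfExt_continuousOn f ℓ)⟩

lemma isInducing_AinfEmb : IsInducing (AinfEmb : AinfSpace n Ω → _) := ⟨rfl⟩

lemma tendsto_AinfEmb_iff {ι : Type*} {φ : Filter ι} {u : ι → AinfSpace n Ω}
    {v : (Fin n → ℕ) → C(closure Ω, ℂ)} {G : (Fin n → ℕ) → (Fin n → ℂ) → ℂ}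
    (hv : ∀ ℓ (z : closure Ω), v ℓ z = G ℓ z) :
    Tendsto (fun k => AinfEmb (u k)) φ (𝓝 v) ↔
      ∀ ℓ, ∀ L ⊆ closure Ω, IsCompact L →
        TendstoUniformlyOn (fun k => AinfExt (u k) ℓ) (G ℓ) φ L := by
  rw [tendsto_pi_nhds]
  exact forall_congr' fun ℓ => tendsto_continuousMap_iff_tendstoUniformlyOn (fun _ _ => rfl) (hv ℓ)

lemma tendsto_nhds_Ainf_iff {ι : Type*} {φ : Filter ι} {u : ι → AinfSpace n Ω}
    {f : AinfSpace n Ω} :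
    Tendsto u φ (𝓝 f) ↔ ∀ ℓ, ∀ L ⊆ closure Ω, IsCompact L →
      TendstoUniformlyOn (fun k => AinfExt (u k) ℓ) (AinfExt f ℓ) φ L :=
  isInducing_AinfEmb.tendsto_nhds_iff.trans (tendsto_AinfEmb_iff fun _ _ => rfl)

lemma eqOn_AinfExt (f : AinfSpace n Ω) (ℓ : Fin n → ℕ) {g : (Fin n → ℂ) → ℂ}
    (hg : ContinuousOn g (closure Ω)) (hgf : EqOn g (Dml ℓ f.1) Ω) :
    EqOn (AinfExt f ℓ) g (closure Ω) :=
  ((AinfExt_eqOn f ℓ).trans hgf.symm).of_subset_closure (AinfExt_continuousOn f ℓ) hg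
    subset_closure subset_rfl

lemma exists_eqOn_AinfExt_of_tendsto (hΩ : IsOpen Ω) {u : ℕ → AinfSpace n Ω}
    {G : (Fin n → ℕ) → (Fin n → ℂ) → ℂ} (hG : ∀ ℓ, ContinuousOn (G ℓ) (closure Ω))
    (hu : ∀ ℓ, ∀ L ⊆ closure Ω, IsCompact L →
      TendstoUniformlyOn (fun k => AinfExt (u k) ℓ) (G ℓ) atTop L) :
    ∃ f : AinfSpace n Ω, ∀ ℓ, EqOn (AinfExt f ℓ) (G ℓ) (closure Ω) := by
  have hDml (ℓ) : TendstoLocallyUniformlyOn (fun k => Dml ℓ (u k).1) (G ℓ) atTop Ω := by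
    refine (tendstoLocallyUniformlyOn_iff_forall_isCompact hΩ).2 fun L hL hLc => ?_
    exact (hu ℓ L (hL.trans subset_closure) hLc).congr
      (.of_forall fun k z hz => AinfExt_eqOn (u k) ℓ (hL hz))
  have hlim : TendstoLocallyUniformlyOn (fun k => (u k).1) (G 0) atTop Ω := by simpa using hDml 0
  have hu_diff : ∀ k, DifferentiableOn ℂ (u k).1 Ω := fun k => (u k).2.1
  have hdiff : DifferentiableOn ℂ (G 0) Ω :=
    differentiableOn_of_tendstoLocallyUniformlyOn hΩ hlim (.of_forall hu_diff)
  have heq (ℓ) : EqOn (G ℓ) (Dml ℓ (G 0)) Ω := fun z hz =>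
    tendsto_nhds_unique ((hDml ℓ).tendsto_at hz)
      ((tendstoLocallyUniformlyOn_Dml hΩ (.of_forall hu_diff) hdiff hlim ℓ).tendsto_at hz)
  exact ⟨⟨G 0, hdiff, fun ℓ => ⟨G ℓ, hG ℓ, heq ℓ⟩⟩, fun ℓ => eqOn_AinfExt _ ℓ (hG ℓ) (heq ℓ)⟩

instance locallyCompactSpace_closure : LocallyCompactSpace (closure Ω) :=
  isClosed_closure.isClosedEmbedding_subtypeVal.locallyCompactSpace

lemma isClosed_range_AinfEmb (hΩ : IsOpen Ω) :
    IsClosed (range (AinfEmb : AinfSpace n Ω → _)) := by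
  refine isClosed_of_closure_subset fun g hg => ?_
  obtain ⟨v, hv, hlim⟩ := mem_closure_iff_seq_limit.1 hg
  choose u hu using hv
  obtain rfl : (fun k => AinfEmb (u k)) = v := funext hu
  let G (ℓ : Fin n → ℕ) : (Fin n → ℂ) → ℂ := Function.extend Subtype.val (g ℓ) 0
  have hgG (ℓ) (z : closure Ω) : g ℓ z = G ℓ z :=
    (Subtype.val_injective.extend_apply _ _ z).symm
  have hG (ℓ) : ContinuousOn (G ℓ) (closure Ω) := by
    rw [continuousOn_iff_continuous_domRestrict]
    exact (g ℓ).continuous.congr (hgG ℓ)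
  obtain ⟨f, hf⟩ := exists_eqOn_AinfExt_of_tendsto hΩ hG ((tendsto_AinfEmb_iff hgG).1 hlim)
  exact ⟨f, funext fun ℓ => ContinuousMap.ext fun z => (hf ℓ z.2).trans (hgG ℓ z).symm⟩

lemma baireSpace_Ainf (hΩ : IsOpen Ω) : BaireSpace (AinfSpace n Ω) := by
  let _ : UniformSpace (AinfSpace n Ω) := .comap AinfEmb inferInstance
  have huniform : IsUniformInducing (AinfEmb : AinfSpace n Ω → _) := ⟨rfl⟩
  have : CompleteSpace (AinfSpace n Ω) :=
    (completeSpace_iff_isComplete_range huniform).2 (isClosed_range_AinfEmb hΩ).isComplete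
  have : (uniformity (AinfSpace n Ω)).IsCountablyGenerated := by
    rw [← huniform.comap_uniformity]
    infer_instance
  have : TopologicalSpace.IsCompletelyPseudoMetrizableSpace (AinfSpace n Ω) :=
    .of_completeSpace_pseudometrizable
  exact BaireSpace.of_completelyPseudoMetrizable

lemma continuousOn_AinfExt_uncurry (ℓ : Fin n → ℕ) :
    ContinuousOn (fun p : AinfSpace n Ω × (Fin n → ℂ) => AinfExt p.1 ℓ p.2)
      (univ ×ˢ closure Ω) := by
  rw [continuousOn_iff_continuous_domRestrict]
  have hemb : Continuous fun f : AinfSpace n Ω => AinfEmb f ℓ :=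
    (continuous_apply ℓ).comp isInducing_AinfEmb.continuous
  exact (hemb.comp (continuous_fst.comp continuous_subtype_val)).eval
    ((continuous_snd.comp continuous_subtype_val).subtype_mk fun x => x.2.2)

/-- The restriction to `Ω` of a polynomial, as an element of `A^∞(Ω)`. -/
def toAinf (Ω : Set (Fin n → ℂ)) (Q : MvPolynomial (Fin n) ℂ) : AinfSpace n Ω :=
  ⟨mvEval Q, (differentiable_mvEval Q).differentiableOn, fun ℓ =>
    ⟨Dml ℓ (mvEval Q), by rw [Dml_mvEval]; fun_prop, fun _ _ => rfl⟩⟩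

lemma eqOn_AinfExt_toAinf (Q : MvPolynomial (Fin n) ℂ) (ℓ : Fin n → ℕ) :
    EqOn (AinfExt (toAinf Ω Q) ℓ) (Dml ℓ (mvEval Q)) (closure Ω) :=
  eqOn_AinfExt _ _ (by rw [Dml_mvEval]; fun_prop) fun _ _ => rfl

end Topology

section Dilation

variable {n : ℕ} {Ω : Set (Fin n → ℂ)} {z₀ : Fin n → ℂ}

lemma dilate_mem_of_mem_closure (hΩ : IsOpen Ω) (hΩc : Convex ℝ Ω) (hz₀ : z₀ ∈ Ω)
    {z : Fin n → ℂ} (hz : z ∈ closure Ω) {t : ℝ} (ht : t ∈ Ico 0 1) :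
    z₀ + (t : ℂ) • (z - z₀) ∈ Ω := by
  have hmem := hΩc.add_smul_sub_mem_interior' hz (hΩ.interior_eq.symm ▸ hz₀) (t := 1 - t)
    ⟨sub_pos.2 ht.2, sub_le_self _ ht.1⟩
  rw [hΩ.interior_eq] at hmem
  convert hmem using 1
  rw [Complex.coe_smul]
  module

lemma tendstoUniformlyOn_Dml_dilate (hΩ : IsOpen Ω) (hΩc : Convex ℝ Ω) (hz₀ : z₀ ∈ Ω)
    (f : AinfSpace n Ω) {L : Set (Fin n → ℂ)} (hL : IsCompact L) (hLΩ : L ⊆ closure Ω)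
    (ℓ : Fin n → ℕ) :
    TendstoUniformlyOn (fun (t : ℝ) => Dml ℓ fun z => f.1 (z₀ + (t : ℂ) • (z - z₀)))
      (AinfExt f ℓ) (𝓝[Ico 0 1] 1) L := by
  let F (t : ℝ) (z : Fin n → ℂ) : ℂ :=
    (t : ℂ) ^ (∑ i, ℓ i) * AinfExt f ℓ (z₀ + (t : ℂ) • (z - z₀))
  have hmem : MapsTo (fun p : ℝ × (Fin n → ℂ) => z₀ + (p.1 : ℂ) • (p.2 - z₀))
      (Icc 0 1 ×ˢ L) (closure Ω) := by
    rintro ⟨t, z⟩ ⟨ht, hz⟩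
    rcases ht.2.eq_or_lt with rfl | ht1
    · simpa using hLΩ hz
    · exact subset_closure (dilate_mem_of_mem_closure hΩ hΩc hz₀ (hLΩ hz) ⟨ht.1, ht1⟩)
  have hF : ContinuousOn F.uncurry (Icc 0 1 ×ˢ L) :=
    ContinuousOn.mul (by fun_prop) ((AinfExt_continuousOn f ℓ).comp (by fun_prop) hmem)
  have hF_one : F 1 = AinfExt f ℓ := by ext z; simp [F]
  have hF_lt {t : ℝ} (ht : t ∈ Ico 0 1) {z : Fin n → ℂ} (hz : z ∈ L) :
      Dml ℓ (fun z => f.1 (z₀ + (t : ℂ) • (z - z₀))) z = F t z := by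
    have hcenter (w : Fin n → ℂ) :
        z₀ + (t : ℂ) • (w - z₀) = (z₀ - (t : ℂ) • z₀) + (t : ℂ) • w := by module
    simp only [hcenter, Dml_comp_add_smul, F]
    rw [← hcenter, AinfExt_eqOn f ℓ (dilate_mem_of_mem_closure hΩ hΩc hz₀ (hLΩ hz) ht)]
  intro u hu
  obtain ⟨v, hv, hvF⟩ :=
    hL.mem_uniformity_of_prod hF (right_mem_Icc.2 zero_le_one) (symm_le_uniformity hu)
  filter_upwards [nhdsWithin_mono 1 Ico_subset_Icc_self hv, self_mem_nhdsWithin] with t htv ht z hz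
  rw [hF_lt ht hz, ← hF_one]
  exact hvF t htv z hz

end Dilation

section JointApproximation

variable {n : ℕ} {K L V : Set (Fin n → ℂ)}

lemma tendstoUniformlyOn_of_forall_dist_lt {X β : Type*} [PseudoMetricSpace β]
    {F : ℕ → X → β} {g : X → β} {S : ℕ → Set X}
    (h : ∀ N : ℕ, ∀ x ∈ S N, dist (F N x) (g x) < 1 / (N + 1)) {s : Set X}
    (hs : ∀ᶠ N in atTop, s ⊆ S N) : TendstoUniformlyOn F g atTop s := by
  refine Metric.tendstoUniformlyOn_iff.2 fun ε hε => ?_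
  filter_upwards [hs, tendsto_one_div_add_atTop_nhds_zero_nat.eventually_lt_const hε]
    with N hN hNε x hx
  rw [dist_comm]
  exact (h N x (hN hx)).trans hNε

lemma exists_seq_mvEval_tendsto (hV : IsOpen V) (hLV : L ⊆ V) {z₀ : Fin n → ℂ}
    (hVs : StarConvex ℝ z₀ V) (hL : IsCompact L) (hLc : Convex ℝ L) (hK : IsCompact K)
    (hKc : Convex ℝ K) (hLK : Disjoint L K) {h g : (Fin n → ℂ) → ℂ}
    (hh : DifferentiableOn ℂ h V) (hg : IsPolyApprox K g) :
    ∃ Q : ℕ → MvPolynomial (Fin n) ℂ,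
      (∀ ℓ, TendstoUniformlyOn (fun k => Dml ℓ (mvEval (Q k))) (Dml ℓ h) atTop L) ∧
        TendstoUniformlyOn (fun k => mvEval (Q k)) g atTop K := by
  obtain ⟨r, hr, hrVK⟩ := hL.exists_cthickening_subset_open (hV.inter hK.isClosed.isOpen_compl)
    (subset_inter hLV hLK.subset_compl_right)
  have hrV := hrVK.trans inter_subset_left
  have hrK := disjoint_left.2 fun z hz => (hrVK hz).2
  have := isCompact_iff_compactSpace.1 (hL.cthickening (r := r))
  choose Q hQh hQg using fun k : ℕ => (isPolyApprox_of_starConvex hV hVs hrV hh).exists_near_near hg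
    hL.cthickening (hLc.cthickening r) hK hKc hrK (Nat.one_div_pos_of_nat (n := k))
  refine ⟨Q, fun ℓ => ?_, ?_⟩
  · have hlim : TendstoLocallyUniformlyOn (fun k => mvEval (Q k)) h atTop
        (Metric.thickening r L) :=
      (tendstoUniformlyOn_of_forall_dist_lt (fun k z hz => by simpa [dist_eq_norm] using hQh k z hz)
        (.of_forall fun _ => Metric.thickening_subset_cthickening r L)).tendstoLocallyUniformlyOn
    have hDml := tendstoLocallyUniformlyOn_Dml Metric.isOpen_thickening
      (.of_forall fun k => (differentiable_mvEval (Q k)).differentiableOn)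
      (hh.mono ((Metric.thickening_subset_cthickening r L).trans hrV)) hlim ℓ
    exact (tendstoLocallyUniformlyOn_iff_forall_isCompact Metric.isOpen_thickening).1 hDml L
      (Metric.self_subset_thickening hr L) hL
  · exact tendstoUniformlyOn_of_forall_dist_lt
      (fun k z hz => by simpa [dist_eq_norm] using hQg k z hz) (.of_forall fun _ => subset_rfl)

variable {Ω : Set (Fin n → ℂ)}

/-- The part of `closure Ω` in the closed ball of radius `N`. These sets exhaust `closure Ω`, and
every compact subset of `closure Ω` is contained in one of them. -/
def closureBall (Ω : Set (Fin n → ℂ)) (N : ℕ) : Set (Fin n → ℂ) :=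
  closure Ω ∩ Metric.closedBall 0 N

lemma isCompact_closureBall (N : ℕ) : IsCompact (closureBall Ω N) :=
  (isCompact_closedBall 0 _).inter_left isClosed_closure

lemma convex_closureBall (hΩc : Convex ℝ Ω) (N : ℕ) : Convex ℝ (closureBall Ω N) :=
  hΩc.closure.inter (convex_closedBall 0 _)

lemma eventually_subset_closureBall (hL : L ⊆ closure Ω) (hLb : Bornology.IsBounded L) :
    ∀ᶠ N in atTop, L ⊆ closureBall Ω N := by
  obtain ⟨B, hB⟩ := hLb.exists_norm_le
  filter_upwards [tendsto_natCast_atTop_atTop.eventually_ge_atTop B] with N hN z hz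
  exact ⟨hL hz, mem_closedBall_zero_iff.2 ((hB z hz).trans hN)⟩

lemma eventually_mem_Iic_const {ι : Type*} [Fintype ι] [DecidableEq ι] (ℓ : ι → ℕ) :
    ∀ᶠ N : ℕ in atTop, ℓ ∈ Finset.Iic fun _ => N := by
  simp only [Finset.mem_Iic, Pi.le_def, eventually_all]
  exact fun i => eventually_ge_atTop (ℓ i)

lemma exists_mvEval_Dml_near_AinfExt (hΩ : IsOpen Ω) (hΩc : Convex ℝ Ω) (hΩne : Ω.Nonempty)
    (f : AinfSpace n Ω) (hL : IsCompact L) (hLc : Convex ℝ L) (hLΩ : L ⊆ closure Ω)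
    (hK : IsCompact K) (hKc : Convex ℝ K) (hKΩ : Disjoint K (closure Ω))
    {g : (Fin n → ℂ) → ℂ} (hg : IsPolyApprox K g) (J : Finset (Fin n → ℕ)) {ε : ℝ} (hε : 0 < ε) :
    ∃ Q : MvPolynomial (Fin n) ℂ,
      (∀ ℓ ∈ J, ∀ z ∈ L, dist (Dml ℓ (mvEval Q) z) (AinfExt f ℓ z) < ε) ∧
        ∀ z ∈ K, dist (mvEval Q z) (g z) < ε := by
  obtain ⟨z₀, hz₀⟩ := hΩne
  have : (𝓝[Ico 0 1] (1 : ℝ)).NeBot := by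
    rw [← mem_closure_iff_nhdsWithin_neBot, closure_Ico zero_ne_one]; simp
  have hdilate := (J.eventually_all).2 fun ℓ _ => Metric.tendstoUniformlyOn_iff.1
    (tendstoUniformlyOn_Dml_dilate hΩ hΩc hz₀ f hL hLΩ ℓ) _ (half_pos hε)
  obtain ⟨t, htf, ht⟩ := (hdilate.and self_mem_nhdsWithin).exists
  let δ (z : Fin n → ℂ) : Fin n → ℂ := z₀ + (t : ℂ) • (z - z₀)
  have hδ : DifferentiableOn ℂ (fun z => f.1 (δ z)) (δ ⁻¹' Ω) :=
    f.2.1.comp (by fun_prop) (mapsTo_preimage δ Ω)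
  have hstar : StarConvex ℝ z₀ (δ ⁻¹' Ω) := by
    intro y hy a b ha hb hab
    have hδ_segment : δ (a • z₀ + b • y) = a • z₀ + b • δ y := by
      obtain rfl : a = 1 - b := eq_sub_of_add_eq hab
      simp only [δ, Complex.coe_smul]
      module
    rw [mem_preimage, hδ_segment]
    exact hΩc hz₀ hy ha hb hab
  obtain ⟨Q, hQf, hQg⟩ := exists_seq_mvEval_tendsto (hΩ.preimage (by fun_prop))
    (fun z hz => dilate_mem_of_mem_closure hΩ hΩc hz₀ (hLΩ hz) ht) hstar hL hLc hK hKc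
    (hKΩ.symm.mono_left hLΩ) hδ hg
  have hQf' := (J.eventually_all).2 fun ℓ _ =>
    Metric.tendstoUniformlyOn_iff.1 (hQf ℓ) _ (half_pos hε)
  obtain ⟨k, hkf, hkg⟩ := (hQf'.and (Metric.tendstoUniformlyOn_iff.1 hQg ε hε)).exists
  refine ⟨Q k, fun ℓ hℓ z hz => ?_, fun z hz => dist_comm (g z) _ ▸ hkg z hz⟩
  rw [dist_comm, ← add_halves ε]
  exact (dist_triangle _ _ _).trans_lt (add_lt_add (htf ℓ hℓ z hz) (hkf ℓ hℓ z hz))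

lemma exists_seq_toAinf_tendsto (hΩ : IsOpen Ω) (hΩc : Convex ℝ Ω) (f : AinfSpace n Ω)
    (hK : IsCompact K) (hKc : Convex ℝ K) (hKΩ : Disjoint K (closure Ω))
    {g : (Fin n → ℂ) → ℂ} (hg : IsPolyApprox K g) :
    ∃ Q : ℕ → MvPolynomial (Fin n) ℂ, Tendsto (fun k => toAinf Ω (Q k)) atTop (𝓝 f) ∧
      TendstoUniformlyOn (fun k => mvEval (Q k)) g atTop K := by
  rcases Ω.eq_empty_or_nonempty with rfl | hne
  · choose Q hQ using fun k : ℕ => hg _ (Nat.one_div_pos_of_nat (n := k))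
    refine ⟨Q, tendsto_nhds_Ainf_iff.2 fun ℓ L hL _ => ?_,
      tendstoUniformlyOn_of_forall_dist_lt (fun k z hz => by simpa [dist_eq_norm] using hQ k z hz)
        (.of_forall fun _ => subset_rfl)⟩
    obtain rfl : L = ∅ := by simpa using hL
    exact tendstoUniformlyOn_empty
  choose Q hQf hQg using fun k : ℕ => exists_mvEval_Dml_near_AinfExt hΩ hΩc hne f
    (isCompact_closureBall k) (convex_closureBall hΩc k) inter_subset_left hK hKc hKΩ hg
    (Finset.Iic fun _ => k) (Nat.one_div_pos_of_nat (n := k))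
  refine ⟨Q, tendsto_nhds_Ainf_iff.2 fun ℓ L hL hLc => ?_,
    tendstoUniformlyOn_of_forall_dist_lt hQg (.of_forall fun _ => subset_rfl)⟩
  refine tendstoUniformlyOn_of_forall_dist_lt
    (S := fun N => {z | z ∈ closureBall Ω N ∧ ℓ ∈ Finset.Iic fun _ => N}) (fun k z hz => ?_) ?_
  · rw [eqOn_AinfExt_toAinf _ _ hz.1.1]
    exact hQf k ℓ hz.2 z hz.1
  · filter_upwards [eventually_subset_closureBall hL hLc.isBounded, eventually_mem_Iic_const ℓ]
      with N hN hℓ z hz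
    exact ⟨hN hz, hℓ⟩

end JointApproximation

section TaylorApproximation

variable {n : ℕ} {Ω L K : Set (Fin n → ℂ)} {Nj : ℕ → Fin n → ℕ} {J : Finset (Fin n → ℕ)}
  {g : (Fin n → ℂ) → ℂ} {ε : ℝ} {lam : ℕ}

/-- The functions in `A^∞(Ω)` whose `lam`-th Taylor sums, for every centre in `L`, are `ε`-close
to `g` on `K` and have derivatives of every order in `J` that are `ε`-close on `L` to those of the
function. -/
def taylorNear (Ω : Set (Fin n → ℂ)) (Nj : ℕ → Fin n → ℕ) (L K : Set (Fin n → ℂ))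
    (J : Finset (Fin n → ℕ)) (g : (Fin n → ℂ) → ℂ) (ε : ℝ) (lam : ℕ) : Set (AinfSpace n Ω) :=
  {f | (∀ q ∈ L ×ˢ K, dist (pSumExt Nj (AinfExt f) q.1 lam q.2) (g q.2) < ε) ∧
    ∀ ℓ ∈ J, ∀ q ∈ L ×ˢ L,
      dist (Dml ℓ (pSumExt Nj (AinfExt f) q.1 lam) q.2) (AinfExt f ℓ q.2) < ε}

lemma isOpen_setOf_forall_dist_lt {X Y β : Type*} [TopologicalSpace X] [TopologicalSpace Y]
    [PseudoMetricSpace β] {C : Set Y} (hC : IsCompact C) {F G : X × Y → β}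
    (hF : ContinuousOn F (univ ×ˢ C)) (hG : ContinuousOn G (univ ×ˢ C)) (ε : ℝ) :
    IsOpen {x | ∀ y ∈ C, dist (F (x, y)) (G (x, y)) < ε} := by
  have := isCompact_iff_compactSpace.1 hC
  have hmap : Continuous fun p : X × C => (p.1, (p.2 : Y)) := by fun_prop
  have hdist : Continuous fun p : X × C => dist (F (p.1, p.2)) (G (p.1, p.2)) :=
    (hF.comp_continuous hmap fun p => ⟨trivial, p.2.2⟩).dist
      (hG.comp_continuous hmap fun p => ⟨trivial, p.2.2⟩)
  refine isOpen_iff_mem_nhds.2 fun x hx => ?_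
  filter_upwards [isCompact_univ.eventually_forall_of_forall_eventually
    (P := fun x (y : C) => dist (F (x, y)) (G (x, y)) < ε) fun y _ =>
      hdist.continuousAt.eventually_lt_const (hx y y.2)] with x' hx' y hy
  exact hx' ⟨y, hy⟩ trivial

lemma continuousOn_Dml_pSumExt (Nj : ℕ → Fin n → ℕ) (lam : ℕ) (ℓ : Fin n → ℕ) :
    ContinuousOn (fun p : AinfSpace n Ω × (Fin n → ℂ) × (Fin n → ℂ) =>
      Dml ℓ (pSumExt Nj (AinfExt p.1) p.2.1 lam) p.2.2) (univ ×ˢ closure Ω ×ˢ univ) := by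
  simp only [Dml_pSumExt]
  refine continuousOn_finsetSum _ fun j _ => .mul (.mul continuousOn_const ?_) ?_
  · exact (continuousOn_AinfExt_uncurry (Nj j)).comp
      (f := fun p : AinfSpace n Ω × (Fin n → ℂ) × (Fin n → ℂ) => (p.1, p.2.1))
      (by fun_prop) fun p hp => ⟨trivial, hp.2.1⟩
  · exact ((continuous_mvEval _).comp (by fun_prop)).continuousOn

lemma isOpen_taylorNear (hL : IsCompact L) (hLΩ : L ⊆ closure Ω) (hK : IsCompact K)
    (hg : ContinuousOn g K) : IsOpen (taylorNear Ω Nj L K J g ε lam) := by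
  have hsum (ℓ) {C : Set (Fin n → ℂ)} := (continuousOn_Dml_pSumExt Nj lam ℓ).mono
    (prod_mono_right (prod_mono hLΩ (subset_univ C)))
  have hval := hsum 0 (C := K)
  simp only [Dml_zero] at hval
  rw [taylorNear, ofPred_and]
  refine .inter ?_ ?_
  · exact isOpen_setOf_forall_dist_lt (hL.prod hK) hval
      (hg.comp (by fun_prop) fun p hp => hp.2.2) ε
  · rw [ofPred_forall]
    simp_rw [ofPred_forall (p := fun (_ : _ ∈ J) _ => _)]
    refine isOpen_biInter_finset fun ℓ _ => ?_
    have hext : ContinuousOn (fun p : AinfSpace n Ω × (Fin n → ℂ) × (Fin n → ℂ) =>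
        AinfExt p.1 ℓ p.2.2) (univ ×ˢ L ×ˢ L) :=
      (continuousOn_AinfExt_uncurry ℓ).comp
        (f := fun p : AinfSpace n Ω × (Fin n → ℂ) × (Fin n → ℂ) => (p.1, p.2.2))
        (by fun_prop) fun p hp => ⟨trivial, hLΩ hp.2.2⟩
    exact isOpen_setOf_forall_dist_lt (hL.prod hL) (hsum ℓ) hext ε

lemma pSumExt_congr {G G' : (Fin n → ℕ) → (Fin n → ℂ) → ℂ} {ζ : Fin n → ℂ}
    (h : ∀ ℓ, G ℓ ζ = G' ℓ ζ) : pSumExt Nj G ζ lam = pSumExt Nj G' ζ lam := by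
  unfold pSumExt
  simp only [h]

lemma eventually_toAinf_mem_taylorNear (hNj : Function.Bijective Nj) (hLΩ : L ⊆ closure Ω)
    {Q : MvPolynomial (Fin n) ℂ} (hQ : ∀ z ∈ K, dist (mvEval Q z) (g z) < ε) (hε : 0 < ε) :
    ∀ᶠ lam in atTop, toAinf Ω Q ∈ taylorNear Ω Nj L K J g ε lam := by
  filter_upwards [eventually_pSumExt_Dml_mvEval hNj Q] with lam hlam
  have hsum {ζ} (hζ : ζ ∈ L) : pSumExt Nj (AinfExt (toAinf Ω Q)) ζ lam = mvEval Q :=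
    (pSumExt_congr fun ℓ => eqOn_AinfExt_toAinf Q ℓ (hLΩ hζ)).trans (hlam ζ)
  refine ⟨fun q hq => ?_, fun ℓ _ q hq => ?_⟩
  · rw [hsum hq.1]
    exact hQ _ hq.2
  · rw [hsum hq.1, eqOn_AinfExt_toAinf Q ℓ (hLΩ hq.2), dist_self]
    exact hε

lemma dense_biUnion_taylorNear (hΩ : IsOpen Ω) (hΩc : Convex ℝ Ω) {𝕄 : Set ℕ} (h𝕄 : 𝕄.Infinite)
    (hNj : Function.Bijective Nj) (hLΩ : L ⊆ closure Ω) (hK : IsCompact K) (hKc : Convex ℝ K)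
    (hKΩ : Disjoint K (closure Ω)) (hg : IsPolyApprox K g) (hε : 0 < ε) :
    Dense (⋃ lam ∈ 𝕄, taylorNear Ω Nj L K J g ε lam) := by
  intro f
  obtain ⟨Q, hQf, hQg⟩ := exists_seq_toAinf_tendsto hΩ hΩc f hK hKc hKΩ hg
  refine mem_closure_of_tendsto hQf ?_
  filter_upwards [Metric.tendstoUniformlyOn_iff.1 hQg ε hε] with k hk
  obtain ⟨lam, hlam, hmem⟩ := ((Nat.frequently_atTop_iff_infinite.2 h𝕄).and_eventually
    (eventually_toAinf_mem_taylorNear hNj hLΩ (fun z hz => dist_comm (g z) _ ▸ hk z hz) hε)).exists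
  exact mem_biUnion hlam hmem

/-- On `K`, the function `g` is a limit of Taylor sums of `f` whose indices lie in `𝕄`, uniformly
for centres in compact subsets of `closure Ω`; there the same Taylor sums converge to `f` with all
their derivatives. -/
def HasTaylorApprox (𝕄 : Set ℕ) (Nj : ℕ → Fin n → ℕ) (K : Set (Fin n → ℂ))
    (g : (Fin n → ℂ) → ℂ) (f : AinfSpace n Ω) : Prop :=
  ∃ lam : ℕ → ℕ, (∀ N, lam N ∈ 𝕄) ∧
    ∀ L : Set (Fin n → ℂ), L ⊆ closure Ω → IsCompact L →
      TendstoUniformlyOn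
        (fun N (q : (Fin n → ℂ) × (Fin n → ℂ)) => pSumExt Nj (AinfExt f) q.1 (lam N) q.2)
        (fun q => g q.2) atTop (L ×ˢ K) ∧
      ∀ ℓ : Fin n → ℕ,
        TendstoUniformlyOn
          (fun N (q : (Fin n → ℂ) × (Fin n → ℂ)) =>
            Dml ℓ (pSumExt Nj (AinfExt f) q.1 (lam N)) q.2)
          (fun q => AinfExt f ℓ q.2) atTop (L ×ˢ L)

namespace HasTaylorApprox

variable {𝕄 : Set ℕ} {f : AinfSpace n Ω}

lemma exists_mem_taylorNear (h : HasTaylorApprox 𝕄 Nj K g f) (hL : IsCompact L)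
    (hLΩ : L ⊆ closure Ω) (J : Finset (Fin n → ℕ)) (hε : 0 < ε) :
    ∃ lam ∈ 𝕄, f ∈ taylorNear Ω Nj L K J g ε lam := by
  obtain ⟨lam, hlam, hlim⟩ := h
  obtain ⟨hg, hDml⟩ := hlim L hLΩ hL
  have hDml' := J.eventually_all.2 fun ℓ _ => Metric.tendstoUniformlyOn_iff.1 (hDml ℓ) ε hε
  obtain ⟨N, hN, hN'⟩ := ((Metric.tendstoUniformlyOn_iff.1 hg ε hε).and hDml').exists
  refine ⟨lam N, hlam N, fun q hq => ?_, fun ℓ hℓ q hq => ?_⟩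
  · rw [dist_comm]
    exact hN q hq
  · rw [dist_comm]
    exact hN' ℓ hℓ q hq

lemma of_forall_nat (h : ∀ N : ℕ, ∃ lam ∈ 𝕄,
    f ∈ taylorNear Ω Nj (closureBall Ω N) K (Finset.Iic fun _ => N) g (1 / (N + 1)) lam) :
    HasTaylorApprox 𝕄 Nj K g f := by
  choose lam hlam hg hDml using h
  refine ⟨lam, hlam, fun L hL hLc => ⟨?_, fun ℓ => ?_⟩⟩
  all_goals have hball := eventually_subset_closureBall hL hLc.isBounded
  · exact tendstoUniformlyOn_of_forall_dist_lt hg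
      (hball.mono fun N hN => prod_mono_left hN)
  · refine tendstoUniformlyOn_of_forall_dist_lt
      (S := fun N => {q | q ∈ closureBall Ω N ×ˢ closureBall Ω N ∧ ℓ ∈ Finset.Iic fun _ => N})
      (fun N q hq => hDml N ℓ hq.2 q hq.1) ?_
    filter_upwards [hball, eventually_mem_Iic_const ℓ] with N hN hℓ q hq
    exact ⟨prod_mono hN hN hq, hℓ⟩

lemma of_forall_near {K' : Set (Fin n → ℂ)} (hKK' : K ⊆ K')
    (h : ∀ ε > 0, ∃ g', HasTaylorApprox 𝕄 Nj K' g' f ∧ ∀ z ∈ K', dist (g' z) (g z) < ε) :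
    HasTaylorApprox 𝕄 Nj K g f := by
  refine of_forall_nat fun N => ?_
  have hε : (0 : ℝ) < 1 / (N + 1) := Nat.one_div_pos_of_nat
  obtain ⟨g', hg', hg'g⟩ := h _ (half_pos hε)
  obtain ⟨lam, hlam, hsum, hDml⟩ := hg'.exists_mem_taylorNear (isCompact_closureBall N)
    inter_subset_left (Finset.Iic fun _ => N) (half_pos hε)
  refine ⟨lam, hlam, fun q hq => ?_, fun ℓ hℓ q hq => (hDml ℓ hℓ q hq).trans (half_lt_self hε)⟩
  calc dist (pSumExt Nj (AinfExt f) q.1 lam q.2) (g q.2)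
      ≤ dist (pSumExt Nj (AinfExt f) q.1 lam q.2) (g' q.2) + dist (g' q.2) (g q.2) :=
        dist_triangle _ _ _
    _ < 1 / (N + 1) / 2 + 1 / (N + 1) / 2 :=
        add_lt_add (hsum q ⟨hq.1, hKK' hq.2⟩) (hg'g _ (hKK' hq.2))
    _ = 1 / (N + 1) := add_halves _

end HasTaylorApprox

lemma setOf_hasTaylorApprox_eq (𝕄 : Set ℕ) (Nj : ℕ → Fin n → ℕ) (K : Set (Fin n → ℂ))
    (g : (Fin n → ℂ) → ℂ) : {f : AinfSpace n Ω | HasTaylorApprox 𝕄 Nj K g f} =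
      ⋂ N : ℕ, ⋃ lam ∈ 𝕄,
        taylorNear Ω Nj (closureBall Ω N) K (Finset.Iic fun _ => N) g (1 / (N + 1)) lam := by
  ext f
  simp only [mem_ofPred_eq, mem_iInter, mem_iUnion, exists_prop]
  exact ⟨fun h N => h.exists_mem_taylorNear (isCompact_closureBall N) inter_subset_left _
    Nat.one_div_pos_of_nat, .of_forall_nat⟩

lemma isGδ_setOf_hasTaylorApprox (𝕄 : Set ℕ) (Nj : ℕ → Fin n → ℕ) (hK : IsCompact K)
    (hg : ContinuousOn g K) : IsGδ {f : AinfSpace n Ω | HasTaylorApprox 𝕄 Nj K g f} := by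
  rw [setOf_hasTaylorApprox_eq]
  exact .iInter_of_isOpen fun N => isOpen_biUnion fun lam _ =>
    isOpen_taylorNear (isCompact_closureBall N) inter_subset_left hK hg

lemma dense_setOf_hasTaylorApprox (hΩ : IsOpen Ω) (hΩc : Convex ℝ Ω) {𝕄 : Set ℕ}
    (h𝕄 : 𝕄.Infinite) (hNj : Function.Bijective Nj) (hK : IsCompact K) (hKc : Convex ℝ K)
    (hKΩ : Disjoint K (closure Ω)) (hg : ContinuousOn g K) (hgK : IsPolyApprox K g) :
    Dense {f : AinfSpace n Ω | HasTaylorApprox 𝕄 Nj K g f} := by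
  have := baireSpace_Ainf hΩ
  rw [setOf_hasTaylorApprox_eq]
  exact dense_iInter_of_isOpen
    (fun N => isOpen_biUnion fun lam _ =>
      isOpen_taylorNear (isCompact_closureBall N) inter_subset_left hK hg)
    fun N => dense_biUnion_taylorNear hΩ hΩc h𝕄 hNj inter_subset_left hK hKc hKΩ hgK
      Nat.one_div_pos_of_nat

end TaylorApproximation

section Universality

lemma exists_countable_compact_convex_between (E : Type*) [NormedAddCommGroup E]
    [NormedSpace ℝ E] [ProperSpace E] :
    ∃ 𝒦 : Set (Set E), 𝒦.Countable ∧ (∀ C ∈ 𝒦, IsCompact C ∧ Convex ℝ C) ∧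
      ∀ K U : Set E, IsCompact K → Convex ℝ K → IsOpen U → K ⊆ U → ∃ C ∈ 𝒦, K ⊆ C ∧ C ⊆ U := by
  obtain ⟨D, hDc, hD⟩ := TopologicalSpace.exists_countable_dense E
  let hullThickening (p : Set E × ℕ) : Set E :=
    Metric.cthickening (1 / (p.2 + 1)) (convexHull ℝ p.1)
  refine ⟨hullThickening '' ({t | t.Finite ∧ t ⊆ D} ×ˢ univ),
    ((countable_ofPred_finite_subset hDc).prod countable_univ).image _, ?_, ?_⟩
  · rintro _ ⟨⟨t, m⟩, ⟨⟨ht, -⟩, -⟩, rfl⟩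
    exact ⟨(ht.isCompact_convexHull ℝ).cthickening, (convex_convexHull ℝ t).cthickening _⟩
  intro K U hK hKc hU hKU
  obtain ⟨δ, hδ, hδU⟩ := hK.exists_cthickening_subset_open hU hKU
  obtain ⟨m, hm⟩ := exists_nat_one_div_lt (half_pos hδ)
  have hr : (0 : ℝ) < 1 / (m + 1) := Nat.one_div_pos_of_nat
  obtain ⟨t, htK, htfin, hKt⟩ := hK.finite_cover_balls (half_pos hr)
  choose d hdD hd using fun x : E => hD.exists_dist_lt x (half_pos hr)
  have hhull : convexHull ℝ (d '' t) ⊆ Metric.cthickening (1 / (m + 1)) K := by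
    refine convexHull_min (image_subset_iff.2 fun x hx => ?_) (hKc.cthickening _)
    refine Metric.mem_cthickening_of_dist_le _ x _ _ (htK hx) ?_
    rw [dist_comm]
    exact (hd x).le.trans (half_le_self hr.le)
  refine ⟨_, mem_image_of_mem _ (mk_mem_prod
    ⟨htfin.image d, image_subset_iff.2 fun x _ => hdD x⟩ (mem_univ m)), fun z hz => ?_, ?_⟩
  · obtain ⟨x, hx, hzx⟩ := mem_iUnion₂.1 (hKt hz)
    refine Metric.mem_cthickening_of_dist_le z (d x) _ _
      (subset_convexHull ℝ _ (mem_image_of_mem d hx)) ?_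
    linarith [dist_triangle z x (d x), hd x, Metric.mem_ball.1 hzx]
  · calc Metric.cthickening (1 / (m + 1)) (convexHull ℝ (d '' t))
        ⊆ Metric.cthickening (1 / (m + 1)) (Metric.cthickening (1 / (m + 1)) K) :=
          Metric.cthickening_subset_of_subset _ hhull
      _ ⊆ Metric.cthickening (1 / (m + 1) + 1 / (m + 1)) K :=
          Metric.cthickening_cthickening_subset hr.le hr.le K
      _ ⊆ Metric.cthickening δ K := Metric.cthickening_mono (by linarith) K
      _ ⊆ U := hδU

variable {n : ℕ}

lemma isPolyApprox_mvEval (K : Set (Fin n → ℂ)) (P : MvPolynomial (Fin n) ℂ) :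
    IsPolyApprox K (mvEval P) :=
  fun ε hε => ⟨P, fun z _ => by simpa using hε⟩

lemma exists_seq_mvEval_uniformly_dense {K : Set (Fin n → ℂ)} (hK : IsCompact K) :
    ∃ p : ℕ → MvPolynomial (Fin n) ℂ, ∀ P : MvPolynomial (Fin n) ℂ, ∀ ε > 0,
      ∃ k, ∀ z ∈ K, dist (mvEval (p k) z) (mvEval P z) < ε := by
  have := isCompact_iff_compactSpace.1 hK
  have hdense := TopologicalSpace.denseRange_denseSeq (range (polyRestrict K))
  choose p hp using fun k => (TopologicalSpace.denseSeq (range (polyRestrict K)) k).2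
  refine ⟨p, fun P ε hε => ?_⟩
  obtain ⟨k, hk⟩ := hdense.exists_dist_lt ⟨polyRestrict K P, mem_range_self P⟩ hε
  rw [Subtype.dist_eq, dist_comm, ← hp k, ContinuousMap.dist_lt_iff hε] at hk
  exact ⟨k, fun z hz => by simpa using hk ⟨z, hz⟩⟩

/-- The functions in `A^∞(Ω)` whose Taylor sums with indices in `𝕄` approximate every polynomial on
every compact convex set disjoint from `closure Ω`. -/
def taylorUniversal (Ω : Set (Fin n → ℂ)) (𝕄 : Set ℕ) (Nj : ℕ → Fin n → ℕ) :
    Set (AinfSpace n Ω) :=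
  {f | ∀ K : Set (Fin n → ℂ), IsCompact K → Convex ℝ K → K ∩ closure Ω = ∅ →
    ∀ P : MvPolynomial (Fin n) ℂ, HasTaylorApprox 𝕄 Nj K (mvEval P) f}

lemma exists_countable_taylorUniversal_eq_biInter (Ω : Set (Fin n → ℂ)) (𝕄 : Set ℕ)
    (Nj : ℕ → Fin n → ℕ) :
    ∃ S : Set (Set (Fin n → ℂ) × MvPolynomial (Fin n) ℂ), S.Countable ∧
      (∀ c ∈ S, IsCompact c.1 ∧ Convex ℝ c.1 ∧ Disjoint c.1 (closure Ω)) ∧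
        taylorUniversal Ω 𝕄 Nj = ⋂ c ∈ S, {f | HasTaylorApprox 𝕄 Nj c.1 (mvEval c.2) f} := by
  obtain ⟨𝒦, h𝒦, h𝒦c, h𝒦_between⟩ := exists_countable_compact_convex_between (Fin n → ℂ)
  choose! p hp using fun (K : Set (Fin n → ℂ)) (hK : IsCompact K) =>
    exists_seq_mvEval_uniformly_dense hK
  let S : Set (Set (Fin n → ℂ) × MvPolynomial (Fin n) ℂ) :=
    (fun q : Set (Fin n → ℂ) × ℕ => (q.1, p q.1 q.2)) ''
      ({K ∈ 𝒦 | Disjoint K (closure Ω)} ×ˢ univ)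
  have hS : ∀ c ∈ S, IsCompact c.1 ∧ Convex ℝ c.1 ∧ Disjoint c.1 (closure Ω) := by
    rintro _ ⟨⟨K, k⟩, ⟨⟨hK, hKΩ⟩, -⟩, rfl⟩
    exact ⟨(h𝒦c K hK).1, (h𝒦c K hK).2, hKΩ⟩
  refine ⟨S, ((h𝒦.mono (sep_subset _ _)).prod countable_univ).image _, hS,
    Subset.antisymm (fun f hf => mem_iInter₂.2 fun c hc => ?_) fun f hf K hK hKc hKΩ P => ?_⟩
  · obtain ⟨hcc, hcv, hcΩ⟩ := hS c hc
    exact hf c.1 hcc hcv hcΩ.inter_eq c.2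
  · obtain ⟨C, hC, hKC, hCΩ⟩ := h𝒦_between K _ hK hKc isClosed_closure.isOpen_compl
      (disjoint_iff_inter_eq_empty.2 hKΩ).subset_compl_right
    refine .of_forall_near hKC fun ε hε => ?_
    obtain ⟨k, hk⟩ := hp C (h𝒦c C hC).1 P ε hε
    have hmem : (C, p C k) ∈ S :=
      ⟨(C, k), ⟨⟨hC, subset_compl_iff_disjoint_right.1 hCΩ⟩, trivial⟩, rfl⟩
    exact ⟨_, mem_iInter₂.1 hf _ hmem, hk⟩

lemma dense_and_isGδ_taylorUniversal {Ω : Set (Fin n → ℂ)} (hΩ : IsOpen Ω) (hΩc : Convex ℝ Ω)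
    {𝕄 : Set ℕ} (h𝕄 : 𝕄.Infinite) {Nj : ℕ → Fin n → ℕ} (hNj : Function.Bijective Nj) :
    Dense (taylorUniversal Ω 𝕄 Nj) ∧ IsGδ (taylorUniversal Ω 𝕄 Nj) := by
  have := baireSpace_Ainf hΩ
  obtain ⟨S, hSc, hS, heq⟩ := exists_countable_taylorUniversal_eq_biInter Ω 𝕄 Nj
  rw [heq]
  have hGδ : ∀ c ∈ S, IsGδ {f : AinfSpace n Ω | HasTaylorApprox 𝕄 Nj c.1 (mvEval c.2) f} :=
    fun c hc => isGδ_setOf_hasTaylorApprox 𝕄 Nj (hS c hc).1 (continuous_mvEval c.2).continuousOn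
  refine ⟨dense_biInter_of_Gδ hGδ hSc fun c hc => ?_, .biInter hSc hGδ⟩
  obtain ⟨hcc, hcv, hcΩ⟩ := hS c hc
  exact dense_setOf_hasTaylorApprox hΩ hΩc h𝕄 hNj hcc hcv hcΩ (continuous_mvEval c.2).continuousOn
    (isPolyApprox_mvEval c.1 c.2)

end Universality

/-- Corollary 3.4: universality in `A^∞(Ω)` with the center of expansion
varying in compact subsets of the closure of `Ω`. -/
theorem cor3_4 (n : ℕ) (𝕄 : Set ℕ) (h𝕄 : 𝕄.Infinite)
    (Ω : Set (Fin n → ℂ)) (hΩo : IsOpen Ω) (hΩcv : Convex ℝ Ω)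
    (Nj : ℕ → Fin n → ℕ) (hNj : Function.Bijective Nj) :
    ∃ U : Set (AinfSpace n Ω),
      U = {f : AinfSpace n Ω |
        ∀ K : Set (Fin n → ℂ), IsCompact K → Convex ℝ K → K ∩ closure Ω = ∅ →
          ∀ P : MvPolynomial (Fin n) ℂ, ∃ lam : ℕ → ℕ, (∀ N, lam N ∈ 𝕄) ∧
            ∀ L : Set (Fin n → ℂ), L ⊆ closure Ω → IsCompact L →
              TendstoUniformlyOn
                (fun N (q : (Fin n → ℂ) × (Fin n → ℂ)) =>
                  pSumExt Nj (AinfExt f) q.1 (lam N) q.2)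
                (fun q => mvEval P q.2) atTop (L ×ˢ K) ∧
              ∀ ℓ : Fin n → ℕ,
                TendstoUniformlyOn
                  (fun N (q : (Fin n → ℂ) × (Fin n → ℂ)) =>
                    Dml ℓ (pSumExt Nj (AinfExt f) q.1 (lam N)) q.2)
                  (fun q => AinfExt f ℓ q.2) atTop (L ×ˢ L)} ∧
      U.Nonempty ∧ Dense U ∧ IsGδ U := by
  obtain ⟨hdense, hGδ⟩ := dense_and_isGδ_taylorUniversal hΩo hΩcv h𝕄 hNj
  have : Nonempty (AinfSpace n Ω) := ⟨toAinf Ω 0⟩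
  exact ⟨taylorUniversal Ω 𝕄 Nj, rfl, hdense.nonempty, hdense, hGδ⟩

end
end

section
/- Existence criterion instance (nonemptiness of the universal class): Let Ω ⊆ ℂⁿ be an open convex set, ζ ∈ Ω, and K ⊆ ℂⁿ a compact convex set with K ∩ Ω = ∅. For every holomorphic polynomial P on ℂⁿ, every compact set L ⊆ Ω, and every ε > 0, there exists a holomorphic polynomial Q on ℂⁿ which is a finite linear combination of the monomials (z−ζ)^{N_j}, such that sup_{z ∈ L} ‖Q(z)‖ < ε and sup_{z ∈ K} ‖Q(z) − P(z)‖ < ε; i.e., there exists b = (b₀,…,b_M, 0, 0, …) with finitely many nonzero terms such that Σ_{j=0}^{M} b_j (z−ζ)^{N_j} is uniformly small on L and uniformly ε-close to P on K. -/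
open Set Filter Topology

noncomputable section

/-!
The convex hulls of `K` and `L` are strictly separated by a real hyperplane, so some polynomial `G`
of degree one maps `L` into the open left half-plane and `K` into the open right half-plane. It is
then enough to find one-variable polynomials close to `0` on a given compact subset of the left
half-plane and close to `1` on a given compact subset of the right one, and to multiply `P` by such
a polynomial in `G`.

Newton's iteration `z ↦ (z + z⁻¹) / 2` for `w ^ 2 = 1` converges to `-1` and `1` on the two
half-planes, locally uniformly. Its iterates are uniform limits of polynomials on a compact set `T`
avoiding the imaginary axis: the axis is an unbounded connected set outside the spectrum of the
coordinate function in `C(T, ℂ)`, hence also outside its spectrum in the closure of the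
polynomials, so that closure is stable under the iteration.
-/

open scoped Polynomial

section InverseClosed

theorem disjoint_spectrum_of_not_isBounded {A : Type*} [NormedRing A] [NormedAlgebra ℂ A]
    [CompleteSpace A] (S : Subalgebra ℂ A) [IsClosed (S : Set A)] (a : S) {C : Set ℂ}
    (hCconn : IsPreconnected C) (hCunb : ¬ Bornology.IsBounded C)
    (hC : Disjoint C (spectrum ℂ (a : A))) : Disjoint C (spectrum ℂ a) := by
  rw [Set.disjoint_left]
  intro z hzC hza
  exact hCunb ((Subalgebra.spectrum_isBounded_connectedComponentIn S a hza).subset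
    (hCconn.subset_connectedComponentIn hzC hC.subset_compl_right))

theorem isPreconnected_imaginaryAxis : IsPreconnected {z : ℂ | z.re = 0} :=
  (convex_hyperplane Complex.reLm.isLinear 0).isPreconnected

theorem not_isBounded_imaginaryAxis : ¬ Bornology.IsBounded {z : ℂ | z.re = 0} := by
  intro h
  obtain ⟨R, hR⟩ := h.exists_norm_le
  have h_large := hR (((|R| + 1 : ℝ) : ℂ) * Complex.I) (by simp)
  rw [norm_mul, Complex.norm_I, mul_one, Complex.norm_of_nonneg (by positivity)] at h_large
  linarith [le_abs_self R]

variable {X : Type*} [TopologicalSpace X] [CompactSpace X]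

theorem exists_mem_eq_inv_of_re_ne_zero {S : Subalgebra ℂ C(X, ℂ)}
    (hS : IsClosed (S : Set C(X, ℂ))) {f : C(X, ℂ)} (hfS : f ∈ S) (hf : ∀ x, (f x).re ≠ 0) :
    ∃ g ∈ S, ∀ x, g x = (f x)⁻¹ := by
  have := hS
  have h_axis : Disjoint {z : ℂ | z.re = 0} (spectrum ℂ f) := by
    rw [ContinuousMap.spectrum_eq_range, Set.disjoint_right]
    rintro _ ⟨x, rfl⟩
    exact hf x
  have h_zero : (0 : ℂ) ∉ spectrum ℂ (⟨f, hfS⟩ : S) :=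
    Set.disjoint_left.1 (disjoint_spectrum_of_not_isBounded S ⟨f, hfS⟩
      isPreconnected_imaginaryAxis not_isBounded_imaginaryAxis h_axis) Complex.zero_re
  obtain ⟨g, hg⟩ := (spectrum.zero_notMem_iff ℂ |>.1 h_zero).exists_left_inv
  refine ⟨g, g.2, fun x => eq_inv_of_mul_eq_one_left ?_⟩
  exact congrArg (fun h : S => (h : C(X, ℂ)) x) hg

end InverseClosed

section Newton

/-- Newton's iteration step for the equation `w ^ 2 = 1`, whose iterates converge to the
sign of the real part. Its value at `0` is the junk value `0`. -/
def newtonSign (z : ℂ) : ℂ := (z + z⁻¹) / 2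

theorem newtonSign_neg (z : ℂ) : newtonSign (-z) = -newtonSign z := by
  simp only [newtonSign, inv_neg]
  ring

theorem iterate_newtonSign_neg (k : ℕ) (z : ℂ) : newtonSign^[k] (-z) = -newtonSign^[k] z :=
  Function.Commute.iterate_left (f := newtonSign) (g := Neg.neg) newtonSign_neg k z

theorem newtonSign_re (z : ℂ) :
    (newtonSign z).re = z.re * ((1 + (Complex.normSq z)⁻¹) / 2) := by
  simp only [newtonSign, Complex.div_ofNat_re, Complex.add_re, Complex.inv_re]
  ring

theorem newtonSign_re_pos {z : ℂ} (hz : 0 < z.re) : 0 < (newtonSign z).re := by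
  have := Complex.normSq_nonneg z
  rw [newtonSign_re]
  positivity

theorem newtonSign_re_ne_zero {z : ℂ} (hz : z.re ≠ 0) : (newtonSign z).re ≠ 0 := by
  have := Complex.normSq_nonneg z
  rw [newtonSign_re]
  positivity

theorem add_one_ne_zero_of_re_pos {z : ℂ} (hz : 0 < z.re) : z + 1 ≠ 0 := by
  intro h
  have h_re : z.re + 1 = 0 := congrArg Complex.re h
  linarith

/-- The Cayley transform, conjugating `newtonSign` on the right half-plane to squaring on the
unit disc. -/
def cayley (z : ℂ) : ℂ := (z - 1) / (z + 1)

theorem cayley_newtonSign {z : ℂ} (hz : 0 < z.re) : cayley (newtonSign z) = cayley z ^ 2 := by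
  have hz0 : z ≠ 0 := by
    rintro rfl
    exact hz.ne rfl
  have hz1 := add_one_ne_zero_of_re_pos hz
  have hN1 := add_one_ne_zero_of_re_pos (newtonSign_re_pos hz)
  rw [cayley, cayley, div_pow, div_eq_div_iff hN1 (pow_ne_zero 2 hz1), newtonSign]
  field_simp
  ring

theorem iterate_newtonSign_re_pos {z : ℂ} (hz : 0 < z.re) (k : ℕ) :
    0 < (newtonSign^[k] z).re :=
  Set.MapsTo.iterate (s := {w : ℂ | 0 < w.re}) (fun _ => newtonSign_re_pos) k hz

theorem cayley_iterate_newtonSign {z : ℂ} (hz : 0 < z.re) (k : ℕ) :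
    cayley (newtonSign^[k] z) = cayley z ^ 2 ^ k := by
  induction k with
  | zero => simp
  | succ k ih =>
    rw [Function.iterate_succ_apply', cayley_newtonSign (iterate_newtonSign_re_pos hz k), ih,
      ← pow_mul, pow_succ]

theorem norm_cayley_lt_one {z : ℂ} (hz : 0 < z.re) : ‖cayley z‖ < 1 := by
  rw [cayley, norm_div, div_lt_one (norm_pos_iff.2 (add_one_ne_zero_of_re_pos hz)),
    ← sq_lt_sq₀ (norm_nonneg _) (norm_nonneg _), Complex.sq_norm, Complex.sq_norm,
    Complex.normSq_apply, Complex.normSq_apply]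
  simp only [Complex.sub_re, Complex.add_re, Complex.sub_im, Complex.add_im, Complex.one_re,
    Complex.one_im]
  nlinarith

theorem norm_sub_one_le_four_mul_norm_cayley {z : ℂ} (hz : 0 < z.re) (hzc : ‖cayley z‖ ≤ 1 / 2) :
    ‖z - 1‖ ≤ 4 * ‖cayley z‖ := by
  have h_eq : ‖z - 1‖ = ‖cayley z‖ * ‖z + 1‖ := by
    rw [← norm_mul, cayley, div_mul_cancel₀ _ (add_one_ne_zero_of_re_pos hz)]
  have h_tri : ‖z + 1‖ ≤ ‖z - 1‖ + 2 := by
    simpa [show z - 1 + 2 = z + 1 by ring] using norm_add_le (z - 1) 2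
  nlinarith [norm_nonneg (cayley z)]

theorem exists_norm_cayley_le {T : Set ℂ} (hT : IsCompact T) (hre : ∀ z ∈ T, 0 < z.re) :
    ∃ q, 0 ≤ q ∧ q < 1 ∧ ∀ z ∈ T, ‖cayley z‖ ≤ q := by
  rcases T.eq_empty_or_nonempty with rfl | hne
  · exact ⟨0, le_rfl, one_pos, by simp⟩
  have h_cont : ContinuousOn cayley T :=
    (continuousOn_id.sub continuousOn_const).div (continuousOn_id.add continuousOn_const)
      fun z hz => add_one_ne_zero_of_re_pos (hre z hz)
  obtain ⟨w, hw, hmax⟩ := hT.exists_isMaxOn hne h_cont.norm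
  exact ⟨‖cayley w‖, norm_nonneg _, norm_cayley_lt_one (hre w hw), hmax⟩

theorem tendstoUniformlyOn_iterate_newtonSign_one {T : Set ℂ} (hT : IsCompact T)
    (hre : ∀ z ∈ T, 0 < z.re) :
    TendstoUniformlyOn (fun k => newtonSign^[k]) (fun _ => 1) atTop T := by
  obtain ⟨q, hq0, hq1, hq⟩ := exists_norm_cayley_le hT hre
  have h_lim : Tendsto (fun k : ℕ => q ^ 2 ^ k) atTop (𝓝 0) :=
    (tendsto_pow_atTop_nhds_zero_of_lt_one hq0 hq1).comp
      (tendsto_pow_atTop_atTop_of_one_lt one_lt_two)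
  rw [Metric.tendstoUniformlyOn_iff]
  intro δ hδ
  filter_upwards [h_lim.eventually_lt_const (show (0 : ℝ) < min (1 / 2) (δ / 4) by positivity)]
    with k hk z hz
  rw [lt_min_iff] at hk
  have h_cayley : ‖cayley (newtonSign^[k] z)‖ ≤ q ^ 2 ^ k := by
    rw [cayley_iterate_newtonSign (hre z hz), norm_pow]
    exact pow_le_pow_left₀ (norm_nonneg _) (hq z hz) _
  rw [dist_comm, dist_eq_norm]
  linarith [norm_sub_one_le_four_mul_norm_cayley (iterate_newtonSign_re_pos (hre z hz) k)
    (h_cayley.trans hk.1.le)]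

theorem tendstoUniformlyOn_iterate_newtonSign_neg_one {T : Set ℂ} (hT : IsCompact T)
    (hre : ∀ z ∈ T, z.re < 0) :
    TendstoUniformlyOn (fun k => newtonSign^[k]) (fun _ => -1) atTop T := by
  have h_neg := tendstoUniformlyOn_iterate_newtonSign_one hT.neg fun z hz => by
    simpa using hre (-z) hz
  rw [Metric.tendstoUniformlyOn_iff] at h_neg ⊢
  intro δ hδ
  filter_upwards [h_neg δ hδ] with k hk z hz
  simpa only [iterate_newtonSign_neg, dist_neg, ← dist_neg_neg (-1 : ℂ), neg_neg]
    using hk (-z) (by simpa using hz)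

end Newton

section Approximation

theorem exists_mem_eq_iterate_newtonSign {X : Type*} [TopologicalSpace X] [CompactSpace X]
    {S : Subalgebra ℂ C(X, ℂ)} (hS : IsClosed (S : Set C(X, ℂ))) {f : C(X, ℂ)} (hfS : f ∈ S)
    (hf : ∀ x, (f x).re ≠ 0) (k : ℕ) : ∃ g ∈ S, ∀ x, g x = newtonSign^[k] (f x) := by
  induction k generalizing f with
  | zero => exact ⟨f, hfS, fun _ => rfl⟩
  | succ k ih =>
    obtain ⟨g, hgS, hg⟩ := exists_mem_eq_inv_of_re_ne_zero hS hfS hf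
    have h_step : ∀ x, ((2⁻¹ : ℂ) • (f + g)) x = newtonSign (f x) := fun x => by
      simp only [ContinuousMap.smul_apply, ContinuousMap.add_apply, hg, smul_eq_mul, newtonSign]
      ring
    simpa only [h_step, Function.iterate_succ_apply] using ih (S.smul_mem (S.add_mem hfS hgS) 2⁻¹)
      fun x => h_step x ▸ newtonSign_re_ne_zero (hf x)

theorem exists_polynomial_near_iterate_newtonSign {T : Set ℂ} (hT : IsCompact T)
    (hre : ∀ z ∈ T, z.re ≠ 0) (k : ℕ) {δ : ℝ} (hδ : 0 < δ) :
    ∃ p : ℂ[X], ∀ z ∈ T, dist (p.eval z) (newtonSign^[k] z) < δ := by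
  have := isCompact_iff_compactSpace.1 hT
  have h_id : Polynomial.X.toContinuousMapOn T ∈ (polynomialFunctions T).topologicalClosure :=
    Subalgebra.le_topologicalClosure _ ⟨Polynomial.X, trivial, rfl⟩
  obtain ⟨g, hg_closure, hg⟩ := exists_mem_eq_iterate_newtonSign
    (Subalgebra.isClosed_topologicalClosure _) h_id (fun z => by simpa using hre z z.2) k
  obtain ⟨_, ⟨p, -, rfl⟩, hp⟩ := Metric.mem_closure_iff.1 hg_closure δ hδ
  refine ⟨p, fun z hz => ?_⟩
  have h_dist := (ContinuousMap.dist_apply_le_dist (⟨z, hz⟩ : T)).trans_lt hp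
  rw [hg, dist_comm] at h_dist
  simpa using h_dist

theorem exists_polynomial_near_zero_near_one {A B : Set ℂ} (hA : IsCompact A) (hB : IsCompact B)
    (hAre : ∀ z ∈ A, z.re < 0) (hBre : ∀ z ∈ B, 0 < z.re) {δ : ℝ} (hδ : 0 < δ) :
    ∃ q : ℂ[X], (∀ z ∈ A, ‖q.eval z‖ < δ) ∧ ∀ z ∈ B, ‖q.eval z - 1‖ < δ := by
  obtain ⟨k, hkA, hkB⟩ :=
    ((Metric.tendstoUniformlyOn_iff.1
      (tendstoUniformlyOn_iterate_newtonSign_neg_one hA hAre) δ hδ).and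
    (Metric.tendstoUniformlyOn_iff.1
      (tendstoUniformlyOn_iterate_newtonSign_one hB hBre) δ hδ)).exists
  obtain ⟨p, hp⟩ := exists_polynomial_near_iterate_newtonSign (hA.union hB)
    (fun z hz => hz.elim (fun h => (hAre z h).ne) fun h => (hBre z h).ne') k hδ
  have h_half {z s : ℂ} (hz : z ∈ A ∪ B) (hs : dist s (newtonSign^[k] z) < δ) :
      ‖2⁻¹ * (p.eval z - s)‖ < δ := by
    have h_dist := dist_triangle_right (p.eval z) s (newtonSign^[k] z)
    rw [norm_mul, norm_inv, Complex.norm_ofNat, ← dist_eq_norm]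
    linarith [hp z hz]
  refine ⟨Polynomial.C 2⁻¹ * (p + 1), fun z hz => ?_, fun z hz => ?_⟩
  · convert h_half (Or.inl hz) (hkA z hz) using 2
    simp
  · convert h_half (Or.inr hz) (hkB z hz) using 2
    simp only [Polynomial.eval_mul, Polynomial.eval_C, Polynomial.eval_add, Polynomial.eval_one]
    ring

variable {σ : Type*}

theorem exists_mvPolynomial_small_on_close_on {K L : Set (σ → ℂ)} (hK : IsCompact K)
    (hL : IsCompact L) {G : MvPolynomial σ ℂ} (hGL : ∀ z ∈ L, (MvPolynomial.eval z G).re < 0)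
    (hGK : ∀ z ∈ K, 0 < (MvPolynomial.eval z G).re) (P : MvPolynomial σ ℂ) {ε : ℝ}
    (hε : 0 < ε) :
    ∃ Q : MvPolynomial σ ℂ, (∀ z ∈ L, ‖MvPolynomial.eval z Q‖ < ε) ∧
      ∀ z ∈ K, ‖MvPolynomial.eval z Q - MvPolynomial.eval z P‖ < ε := by
  have hG_cont := MvPolynomial.continuous_eval G
  obtain ⟨C, hC⟩ := (hL.union hK).exists_bound_of_continuousOn
    (MvPolynomial.continuous_eval P).continuousOn
  have hC_pos : 0 < |C| + 1 := by positivity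
  obtain ⟨q, hqL, hqK⟩ := exists_polynomial_near_zero_near_one (hL.image hG_cont)
    (hK.image hG_cont) (Set.forall_mem_image.2 hGL) (Set.forall_mem_image.2 hGK)
    (div_pos hε hC_pos)
  have h_mul {z : σ → ℂ} {s : ℂ} (hz : z ∈ L ∪ K) (hs : ‖s‖ < ε / (|C| + 1)) :
      ‖s * MvPolynomial.eval z P‖ < ε := by
    have hP : ‖MvPolynomial.eval z P‖ < |C| + 1 := by linarith [hC z hz, le_abs_self C]
    calc ‖s * MvPolynomial.eval z P‖ = ‖s‖ * ‖MvPolynomial.eval z P‖ := norm_mul _ _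
      _ < ε / (|C| + 1) * (|C| + 1) := mul_lt_mul'' hs hP (norm_nonneg _) (norm_nonneg _)
      _ = ε := div_mul_cancel₀ _ hC_pos.ne'
  have h_eval : ∀ z, MvPolynomial.eval z (Polynomial.aeval G q * P) =
      q.eval (MvPolynomial.eval z G) * MvPolynomial.eval z P := fun z => by
    rw [map_mul, ← MvPolynomial.coe_aeval_eq_eval, RingHom.coe_coe,
      ← Polynomial.aeval_algHom_apply, Polynomial.coe_aeval_eq_eval]
  refine ⟨Polynomial.aeval G q * P, fun z hz => ?_, fun z hz => ?_⟩
  · rw [h_eval]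
    exact h_mul (Or.inl hz) (hqL _ ⟨z, hz, rfl⟩)
  · rw [h_eval, ← sub_one_mul]
    exact h_mul (Or.inr hz) (hqK _ ⟨z, hz, rfl⟩)

end Approximation

section ConvexHull

open Module

variable {E : Type*} [AddCommGroup E] [Module ℝ E] [FiniteDimensional ℝ E] {s : Set E}

theorem mem_convexHull_iff_exists_fin_finrank_succ {x : E} :
    x ∈ convexHull ℝ s ↔ ∃ w ∈ stdSimplex ℝ (Fin (finrank ℝ E + 1)),
      ∃ p : Fin (finrank ℝ E + 1) → E, (∀ j, p j ∈ s) ∧ ∑ j, w j • p j = x := by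
  refine ⟨fun hx => ?_, fun ⟨w, hw, p, hp, hx⟩ =>
    mem_convexHull_of_exists_fintype w p hw.1 hw.2 hp hx⟩
  obtain ⟨a, ha⟩ := convexHull_nonempty_iff.1 ⟨x, hx⟩
  obtain ⟨ι, _, p, w, hps, hp_indep, hw_pos, hw_sum, hx⟩ := eq_pos_convex_span_of_mem_convexHull hx
  have h_card : Fintype.card ι ≤ Fintype.card (Fin (finrank ℝ E + 1)) := by
    rw [Fintype.card_fin]
    exact hp_indep.card_le_finrank_succ.trans (Nat.succ_le_succ (Submodule.finrank_le _))
  obtain ⟨e⟩ := Function.Embedding.nonempty_of_card_le h_card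
  have h_off : ∀ j ∉ Set.range e, Function.extend e w 0 j = 0 := fun j hj =>
    Function.extend_apply' _ _ _ hj
  refine ⟨Function.extend e w 0, ⟨fun j => ?_, ?_⟩, Function.extend e p fun _ => a,
    fun j => ?_, ?_⟩
  · by_cases hj : j ∈ Set.range e
    · obtain ⟨i, rfl⟩ := hj
      rw [e.injective.extend_apply]
      exact (hw_pos i).le
    · exact (h_off j hj).ge
  · rw [← hw_sum]
    exact (Fintype.sum_of_injective e e.injective _ _ h_off
      fun i => (e.injective.extend_apply _ _ i).symm).symm
  · by_cases hj : j ∈ Set.range e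
    · obtain ⟨i, rfl⟩ := hj
      rw [e.injective.extend_apply]
      exact hps ⟨i, rfl⟩
    · rwa [Function.extend_apply' _ _ _ hj]
  · rw [← hx]
    refine (Fintype.sum_of_injective e e.injective _ _ (fun j hj => ?_) fun i => ?_).symm
    · rw [h_off j hj, zero_smul]
    · rw [e.injective.extend_apply, e.injective.extend_apply]

theorem isCompact_convexHull [TopologicalSpace E] [ContinuousAdd E] [ContinuousSMul ℝ E]
    (hs : IsCompact s) : IsCompact (convexHull ℝ s) := by
  have h_image : convexHull ℝ s =
      (fun q : (Fin (finrank ℝ E + 1) → ℝ) × (Fin (finrank ℝ E + 1) → E) => ∑ j, q.1 j • q.2 j) ''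
        (stdSimplex ℝ _ ×ˢ Set.univ.pi fun _ => s) := by
    ext x
    simp [mem_convexHull_iff_exists_fin_finrank_succ, and_assoc]
  rw [h_image]
  exact ((isCompact_stdSimplex ℝ _).prod (isCompact_univ_pi fun _ => hs)).image (by fun_prop)

end ConvexHull

section Separation

variable {σ : Type*} [Finite σ]

theorem exists_mvPolynomial_eval_eq_linearMap {R : Type*} [CommSemiring R] (f : (σ → R) →ₗ[R] R) :
    ∃ G : MvPolynomial σ R, ∀ z, MvPolynomial.eval z G = f z := by
  classical
  have := Fintype.ofFinite σ
  refine ⟨∑ i, MvPolynomial.X i * MvPolynomial.C (f (Pi.single i 1)), fun z => ?_⟩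
  conv_rhs => rw [pi_eq_sum_univ' z]
  simp

theorem exists_mvPolynomial_re_neg_re_pos {K L : Set (σ → ℂ)} (hK : IsCompact K)
    (hL : IsCompact L) (hKL : Disjoint (convexHull ℝ K) (convexHull ℝ L)) :
    ∃ G : MvPolynomial σ ℂ, (∀ z ∈ L, (MvPolynomial.eval z G).re < 0) ∧
      ∀ z ∈ K, 0 < (MvPolynomial.eval z G).re := by
  obtain ⟨f, u, v, hfL, huv, hfK⟩ := RCLike.geometric_hahn_banach_compact_closed (𝕜 := ℂ)
    (convex_convexHull ℝ L) (isCompact_convexHull hL)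
    (convex_convexHull ℝ K) (isCompact_convexHull hK).isClosed hKL.symm
  obtain ⟨G, hG⟩ := exists_mvPolynomial_eval_eq_linearMap (f : (σ → ℂ) →ₗ[ℂ] ℂ)
  have h_re : ∀ z, (MvPolynomial.eval z (G - MvPolynomial.C (u : ℂ))).re = (f z).re - u :=
    fun z => by simp [hG]
  refine ⟨G - MvPolynomial.C (u : ℂ), fun z hz => ?_, fun z hz => ?_⟩
  · rw [h_re]
    exact sub_neg.2 (hfL z (subset_convexHull ℝ L hz))
  · rw [h_re]
    exact sub_pos.2 (huv.trans (hfK z (subset_convexHull ℝ K hz)))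

end Separation

section Expansion

variable {σ R : Type*}

theorem eval_bind₁_X_add_C [CommSemiring R] (ζ w : σ → R) (Q : MvPolynomial σ R) :
    MvPolynomial.eval w
        (MvPolynomial.bind₁ (fun i => MvPolynomial.X i + MvPolynomial.C (ζ i)) Q) =
      MvPolynomial.eval (w + ζ) Q := by
  rw [MvPolynomial.eval, MvPolynomial.eval₂Hom_bind₁]
  congr 2
  ext i
  simp

variable [Fintype σ] [CommRing R]

theorem eval_mem_span_shifted_monomials (ζ : σ → R) (Q : MvPolynomial σ R) :
    (fun z => MvPolynomial.eval z Q) ∈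
      Submodule.span R (Set.range fun (d : σ → ℕ) (z : σ → R) => ∏ i, (z i - ζ i) ^ d i) := by
  let Q' := MvPolynomial.bind₁ (fun i => MvPolynomial.X i + MvPolynomial.C (ζ i)) Q
  have h_sum : (fun z => MvPolynomial.eval z Q) =
      ∑ d ∈ Q'.support, Q'.coeff d • fun z : σ → R => ∏ i, (z i - ζ i) ^ d i := by
    ext z
    have h_shift := eval_bind₁_X_add_C ζ (z - ζ) Q
    rw [sub_add_cancel, MvPolynomial.eval_eq'] at h_shift
    simpa only [Finset.sum_apply, Pi.smul_apply, smul_eq_mul, Pi.sub_apply] using h_shift.symm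
  rw [h_sum]
  exact Submodule.sum_mem _ fun d _ =>
    Submodule.smul_mem _ _ (Submodule.subset_span ⟨d, rfl⟩)

theorem exists_sum_shifted_monomials_eq_eval {Nj : ℕ → σ → ℕ} (hNj : Function.Surjective Nj)
    (ζ : σ → R) (Q : MvPolynomial σ R) :
    ∃ (M : ℕ) (b : ℕ → R), ∀ z : σ → R,
      ∑ j ∈ Finset.range (M + 1), b j * ∏ i, (z i - ζ i) ^ Nj j i = MvPolynomial.eval z Q := by
  have h_span := eval_mem_span_shifted_monomials ζ Q
  rw [← hNj.range_comp] at h_span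
  obtain ⟨c, hc⟩ := Finsupp.mem_span_range_iff_exists_finsupp.1 h_span
  have h_range : c.support ⊆ Finset.range (c.support.sup id + 1) := fun j hj =>
    Finset.mem_range_succ_iff.2 (Finset.le_sup (f := id) hj)
  refine ⟨c.support.sup id, c, fun z => ?_⟩
  rw [← congrFun hc z, Finsupp.sum_of_support_subset c h_range _ (by simp)]
  simp only [Finset.sum_apply, Pi.smul_apply, smul_eq_mul, Function.comp_apply]

end Expansion

theorem existence_criterion_general {σ : Type*} [Fintype σ] {K L : Set (σ → ℂ)}
    (hK : IsCompact K) (hL : IsCompact L) (hKL : Disjoint (convexHull ℝ K) (convexHull ℝ L))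
    (ζ : σ → ℂ) {Nj : ℕ → σ → ℕ} (hNj : Function.Surjective Nj) (P : MvPolynomial σ ℂ)
    {ε : ℝ} (hε : 0 < ε) :
    ∃ (M : ℕ) (b : ℕ → ℂ),
      (∀ z ∈ L, ‖∑ j ∈ Finset.range (M + 1), b j * ∏ i, (z i - ζ i) ^ (Nj j i)‖ < ε) ∧
      (∀ z ∈ K, ‖(∑ j ∈ Finset.range (M + 1), b j * ∏ i, (z i - ζ i) ^ (Nj j i)) -
        MvPolynomial.eval z P‖ < ε) := by
  obtain ⟨G, hGL, hGK⟩ := exists_mvPolynomial_re_neg_re_pos hK hL hKL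
  obtain ⟨Q, hQL, hQK⟩ := exists_mvPolynomial_small_on_close_on hK hL hGL hGK P hε
  obtain ⟨M, b, hMb⟩ := exists_sum_shifted_monomials_eq_eval hNj ζ Q
  exact ⟨M, b, fun z hz => by simpa only [hMb] using hQL z hz,
    fun z hz => by simpa only [hMb] using hQK z hz⟩

/-- nonemptiness criterion for the universal class: a finite linear
combination of the monomials `(z-ζ)^{N_j}` which is uniformly small on `L ⊆ Ω` and
uniformly `ε`-close to `P` on `K`. -/
theorem existence_criterion (n : ℕ) (Ω : Set (Fin n → ℂ))
    (hΩo : IsOpen Ω) (hΩcv : Convex ℝ Ω)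
    (ζ : Fin n → ℂ) (hζ : ζ ∈ Ω)
    (K : Set (Fin n → ℂ)) (hKcpt : IsCompact K) (hKcv : Convex ℝ K) (hKΩ : K ∩ Ω = ∅)
    (Nj : ℕ → Fin n → ℕ) (hNj : Function.Bijective Nj)
    (P : MvPolynomial (Fin n) ℂ)
    (L : Set (Fin n → ℂ)) (hLcpt : IsCompact L) (hLsub : L ⊆ Ω)
    (ε : ℝ) (hε : 0 < ε) :
    ∃ (M : ℕ) (b : ℕ → ℂ),
      (∀ z ∈ L, ‖∑ j ∈ Finset.range (M + 1), b j * ∏ i, (z i - ζ i) ^ (Nj j i)‖ < ε) ∧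
      (∀ z ∈ K,
        ‖(∑ j ∈ Finset.range (M + 1), b j * ∏ i, (z i - ζ i) ^ (Nj j i)) - mvEval P z‖ < ε) := by
  have h_hull : Disjoint (convexHull ℝ K) (convexHull ℝ L) := by
    rw [hKcv.convexHull_eq]
    exact (Set.disjoint_iff_inter_eq_empty.2 hKΩ).mono_right (convexHull_min hLsub hΩcv)
  exact existence_criterion_general hKcpt hLcpt h_hull ζ hNj.surjective P hε

end
end
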